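/- arXiv:1902.09025 — 8 statements merged into one kernel-verified Lean document; each statement's English description precedes it below -/
import Mathlib

section
/- Let H_0, H_1, ..., H_{n-1} be real Hilbert spaces, set H_n = H_0, let G_i : H_0 -> H_i be bounded linear operators for i = 1, ..., n-1, and let G_n be the identity on H_0. Let T_1, ..., T_n be monotone set-valued operators with T_i acting on H_i. Suppose that for each i = 1, ..., n the pair (x_i, y_i) in H_i x H_i satisfies y_i in T_i x_i. Then for every point (z, w_1, ..., w_{n-1}) in the extended solution set S, the separator value phi(z, w_1, ..., w_{n-1}) = sum_{i=1}^n <G_i z - x_i, y_i - w_i> is at most 0, where w_n denotes -sum_{i=1}^{n-1} G_i^* w_i. -/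
open scoped InnerProductSpace

/-- Monotonicity of a set-valued operator on a real inner product space, the property that gives
each summand of the separator its sign. The operator is encoded as `A : E → Set E`, where `a ∈ A x`
means that `(x, a)` lies in its graph. -/
def IsMonotoneOperator {E : Type*} [SeminormedAddCommGroup E] [InnerProductSpace ℝ E]
    (A : E → Set E) : Prop :=
  ∀ x y a b, a ∈ A x → b ∈ A y → 0 ≤ ⟪a - b, x - y⟫_ℝ

theorem IsMonotoneOperator.inner_sub_sub_nonpos
    {E : Type*} [SeminormedAddCommGroup E] [InnerProductSpace ℝ E] {A : E → Set E}
    (hA : IsMonotoneOperator A) {x y a b : E} (ha : a ∈ A x) (hb : b ∈ A y) :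
    ⟪x - y, b - a⟫_ℝ ≤ 0 := by
  have hab : 0 ≤ ⟪a - b, x - y⟫_ℝ := hA x y a b ha hb
  calc ⟪x - y, b - a⟫_ℝ = -⟪a - b, x - y⟫_ℝ := by
        rw [← neg_sub a b, inner_neg_right, real_inner_comm]
    _ ≤ 0 := neg_nonpos.mpr hab

theorem separator_nonpos_on_solution_set_general
    {H0 : Type*} [SeminormedAddCommGroup H0] [InnerProductSpace ℝ H0]
    {ι : Type*} [Fintype ι] {H : ι → Type*} [∀ i, SeminormedAddCommGroup (H i)]
    [∀ i, InnerProductSpace ℝ (H i)]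
    (G : ∀ i, H0 → H i) {T : ∀ i, H i → Set (H i)} {Tn : H0 → Set H0}
    (hT : ∀ i, IsMonotoneOperator (T i)) (hTn : IsMonotoneOperator Tn)
    {x y : ∀ i, H i} {xn yn : H0} (hxy : ∀ i, y i ∈ T i (x i)) (hxyn : yn ∈ Tn xn)
    {z : H0} {w : ∀ i, H i} {wn : H0} (hw : ∀ i, w i ∈ T i (G i z)) (hwn : wn ∈ Tn z) :
    (∑ i, ⟪G i z - x i, y i - w i⟫_ℝ) + ⟪z - xn, yn - wn⟫_ℝ ≤ 0 := by
  have sum_nonpos : ∑ i, ⟪G i z - x i, y i - w i⟫_ℝ ≤ 0 :=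
    Finset.sum_nonpos fun i _ => (hT i).inner_sub_sub_nonpos (hw i) (hxy i)
  have last_nonpos : ⟪z - xn, yn - wn⟫_ℝ ≤ 0 := hTn.inner_sub_sub_nonpos hwn hxyn
  exact add_nonpos sum_nonpos last_nonpos

/-- if `(xᵢ, yᵢ) ∈ gra Tᵢ` for each monotone operator `Tᵢ`, then the separator
value `φ(z, w₁, …, w_{n-1}) = ∑ᵢ ⟪Gᵢ z - xᵢ, yᵢ - wᵢ⟫` is nonpositive on the extended
solution set `S`.  Here the operators `T₁, …, T_{n-1}` act on the spaces `H₁, …, H_{n-1}`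
(indexed by `Fin m` with `m = n - 1`), `Tn` acts on `H₀ = H_n`, and `G_n` is the identity. -/
theorem separator_nonpos_on_solution_set
    {H0 : Type*} [NormedAddCommGroup H0] [InnerProductSpace ℝ H0] [CompleteSpace H0]
    {m : ℕ} {H : Fin m → Type*} [∀ i, NormedAddCommGroup (H i)]
    [∀ i, InnerProductSpace ℝ (H i)] [∀ i, CompleteSpace (H i)]
    (G : ∀ i, H0 →L[ℝ] H i)
    (T : ∀ i, H i → Set (H i)) (Tn : H0 → Set H0)
    (hT : ∀ i, ∀ x y a b, a ∈ T i x → b ∈ T i y → 0 ≤ ⟪a - b, x - y⟫_ℝ)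
    (hTn : ∀ x y a b, a ∈ Tn x → b ∈ Tn y → 0 ≤ ⟪a - b, x - y⟫_ℝ)
    (x : ∀ i, H i) (y : ∀ i, H i) (xn yn : H0)
    (hxy : ∀ i, y i ∈ T i (x i)) (hxyn : yn ∈ Tn xn)
    (z : H0) (w : ∀ i, H i)
    (hw : ∀ i, w i ∈ T i (G i z))
    (hwn : -∑ i, ContinuousLinearMap.adjoint (G i) (w i) ∈ Tn z) :
    (∑ i, ⟪G i z - x i, y i - w i⟫_ℝ)
      + ⟪z - xn, yn - (-∑ i, ContinuousLinearMap.adjoint (G i) (w i))⟫_ℝ ≤ 0 := by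
  exact separator_nonpos_on_solution_set_general (fun i => G i) hT hTn hxy hxyn hw hwn
end

section
/- Let H be a real Hilbert space, let S be a nonempty subset of H, and for every k >= 1 let C_k be a closed convex subset of H with S contained in C_k. Let p^1 in H and define p^{k+1} to be the metric projection of p^k onto C_k for every k >= 1. Then the sequence {p^k} is bounded, and ||p^k - p^{k+1}|| -> 0 as k -> infinity. -/
/-!
A nearest point `v` of `K` to `u` makes an obtuse angle with every `s` about which `K` is star
convex, so `‖v - s‖² + ‖u - v‖² ≤ ‖u - s‖²`. Along the iteration, the distance to `s` therefore
decreases, and the squared step lengths telescope to a series bounded by `‖p 1 - s‖²`.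
-/

open Filter Topology
open scoped RealInnerProductSpace

section NearestPoint

variable {E : Type*} [NormedAddCommGroup E] [InnerProductSpace ℝ E] {K : Set E} {s u v : E}

theorem real_inner_sub_sub_nonpos_of_isMinOn_norm_sub (hK : StarConvex ℝ s K) (hv : v ∈ K)
    (hmin : IsMinOn (fun w ↦ ‖u - w‖) K v) : ⟪u - v, s - v⟫ ≤ 0 := by
  have hmin_segment : IsMinOn (fun w ↦ ‖u - w‖) (segment ℝ s v) v :=
    hmin.on_subset (hK.segment_subset hv)
  have hv_segment : v ∈ segment ℝ s v := right_mem_segment ℝ s v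
  exact (norm_eq_iInf_iff_real_inner_le_zero (convex_segment s v) hv_segment).1
    (hmin_segment.iInf_eq hv_segment).symm s (left_mem_segment ℝ s v)

theorem dist_sq_add_dist_sq_le_of_isMinOn_norm_sub (hK : StarConvex ℝ s K) (hv : v ∈ K)
    (hmin : IsMinOn (fun w ↦ ‖u - w‖) K v) :
    dist v s ^ 2 + dist u v ^ 2 ≤ dist u s ^ 2 := by
  have hobtuse : ⟪u - v, s - v⟫ ≤ 0 := real_inner_sub_sub_nonpos_of_isMinOn_norm_sub hK hv hmin
  have hcosines : ‖u - s‖ ^ 2 = ‖u - v‖ ^ 2 - 2 * ⟪u - v, s - v⟫ + ‖s - v‖ ^ 2 := by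
    rw [← norm_sub_sq_real, sub_sub_sub_cancel_right]
  rw [dist_comm v s, dist_eq_norm, dist_eq_norm, dist_eq_norm]
  linarith

end NearestPoint

theorem summable_of_succ_add_le {a b : ℕ → ℝ} (ha : ∀ n, 0 ≤ a n) (hb : ∀ n, 0 ≤ b n)
    (hab : ∀ n, a (n + 1) + b n ≤ a n) : Summable b := by
  refine summable_of_sum_range_le hb (c := a 0) fun n ↦ ?_
  calc ∑ i ∈ Finset.range n, b i
      ≤ ∑ i ∈ Finset.range n, (a i - a (i + 1)) :=
        Finset.sum_le_sum fun i _ ↦ le_sub_iff_add_le'.2 (hab i)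
    _ = a 0 - a n := Finset.sum_range_sub' a n
    _ ≤ a 0 := sub_le_self _ (ha n)

section DistSqDecrease

variable {X : Type*} [PseudoMetricSpace X] {x : ℕ → X} {s : X}

theorem antitone_dist_of_dist_sq_add_dist_sq_le
    (h : ∀ n, dist (x (n + 1)) s ^ 2 + dist (x n) (x (n + 1)) ^ 2 ≤ dist (x n) s ^ 2) :
    Antitone fun n ↦ dist (x n) s :=
  antitone_nat_of_succ_le fun n ↦
    le_of_sq_le_sq ((le_add_of_nonneg_right (sq_nonneg _)).trans (h n)) dist_nonneg

theorem tendsto_dist_succ_zero_of_dist_sq_add_dist_sq_le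
    (h : ∀ n, dist (x (n + 1)) s ^ 2 + dist (x n) (x (n + 1)) ^ 2 ≤ dist (x n) s ^ 2) :
    Tendsto (fun n ↦ dist (x n) (x (n + 1))) atTop (𝓝 0) := by
  have hsummable : Summable fun n ↦ dist (x n) (x (n + 1)) ^ 2 :=
    summable_of_succ_add_le (a := fun n ↦ dist (x n) s ^ 2)
      (fun _ ↦ sq_nonneg _) (fun _ ↦ sq_nonneg _) h
  simpa only [Real.sqrt_sq dist_nonneg, Real.sqrt_zero] using hsummable.tendsto_atTop_zero.sqrt

end DistSqDecrease

theorem fejer_projection_bounded_and_successive_to_zero_general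
    {H : Type*} [NormedAddCommGroup H] [InnerProductSpace ℝ H] {s : H} {C : ℕ → Set H}
    (hC : ∀ k ≥ 1, StarConvex ℝ s (C k)) {p : ℕ → H} (hmem : ∀ k ≥ 1, p (k + 1) ∈ C k)
    (hnearest : ∀ k ≥ 1, ∀ q ∈ C k, ‖p k - p (k + 1)‖ ≤ ‖p k - q‖) :
    (∃ M : ℝ, ∀ k ≥ 1, ‖p k‖ ≤ M) ∧
      Tendsto (fun k ↦ ‖p k - p (k + 1)‖) atTop (𝓝 0) := by
  have hdecrease (n : ℕ) : dist (p (n + 1 + 1)) s ^ 2 + dist (p (n + 1)) (p (n + 1 + 1)) ^ 2 ≤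
      dist (p (n + 1)) s ^ 2 :=
    have hn : n + 1 ≥ 1 := Nat.le_add_left 1 n
    dist_sq_add_dist_sq_le_of_isMinOn_norm_sub (hC _ hn) (hmem _ hn) (hnearest _ hn)
  constructor
  · refine ⟨dist (p 1) s + ‖s‖, fun k hk ↦ ?_⟩
    obtain ⟨n, rfl⟩ := Nat.exists_eq_add_of_le' hk
    have hdist : dist (p (n + 1)) s ≤ dist (p 1) s :=
      antitone_dist_of_dist_sq_add_dist_sq_le (x := fun n ↦ p (n + 1)) hdecrease n.zero_le
    calc ‖p (n + 1)‖
        ≤ ‖p (n + 1) - s‖ + ‖s‖ := norm_le_norm_sub_add _ _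
      _ = dist (p (n + 1)) s + ‖s‖ := by rw [dist_eq_norm]
      _ ≤ dist (p 1) s + ‖s‖ := by gcongr
  · simp only [← dist_eq_norm]
    exact (tendsto_add_atTop_iff_nat 1).1 <|
      tendsto_dist_succ_zero_of_dist_sq_add_dist_sq_le (x := fun n ↦ p (n + 1)) hdecrease

/-- Fejér-monotone projections.  If `S` is a nonempty subset of a real Hilbert
space, each `C_k` (for `k ≥ 1`) is closed, convex and contains `S`, and `p^{k+1}` is the
metric projection of `p^k` onto `C_k` (characterized as the nearest point of `C_k` to
`p^k`), then the sequence `{p^k}` is bounded and `‖p^k - p^{k+1}‖ → 0`. -/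
theorem fejer_projection_bounded_and_successive_to_zero
    {H : Type*} [NormedAddCommGroup H] [InnerProductSpace ℝ H] [CompleteSpace H]
    (S : Set H) (hS : S.Nonempty)
    (C : ℕ → Set H)
    (hCclosed : ∀ k ≥ 1, IsClosed (C k))
    (hCconvex : ∀ k ≥ 1, Convex ℝ (C k))
    (hSC : ∀ k ≥ 1, S ⊆ C k)
    (p : ℕ → H)
    (hmem : ∀ k ≥ 1, p (k + 1) ∈ C k)
    (hnearest : ∀ k ≥ 1, ∀ q ∈ C k, ‖p k - p (k + 1)‖ ≤ ‖p k - q‖) :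
    (∃ M : ℝ, ∀ k ≥ 1, ‖p k‖ ≤ M) ∧
      Filter.Tendsto (fun k => ‖p k - p (k + 1)‖) Filter.atTop (nhds 0) := by
  obtain ⟨s, hs⟩ := hS
  exact fejer_projection_bounded_and_successive_to_zero_general
    (fun k hk ↦ (hCconvex k hk).starConvex (hSC k hk hs)) hmem hnearest
end

section
/- Let H be a real Hilbert space, let S be a nonempty subset of H, and for every k >= 1 let g_k in H and c_k in R be such that S is contained in the halfspace C_k = {p in H : <g_k, p> + c_k <= 0}, and suppose there is M >= 0 with ||g_k|| <= M for all k. Let p^1 in H and define p^{k+1} to be the metric projection of p^k onto C_k for every k >= 1. Then limsup_{k -> infinity} (<g_k, p^k> + c_k) <= 0. -/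
open scoped InnerProductSpace

/-!
Let `s` be a point common to all the sets `C k`. The variational inequality characterising nearest
points of convex sets gives the Fejér estimate
`‖p k - p (k + 1)‖ ^ 2 + ‖p (k + 1) - s‖ ^ 2 ≤ ‖p k - s‖ ^ 2`,
so the steps `‖p k - p (k + 1)‖` tend to zero. As the separator of index `k` is nonpositive at
`p (k + 1)`, Cauchy–Schwarz bounds its value at `p k` by `M * ‖p k - p (k + 1)‖`.
-/

section ProjectionSequences

open Filter Topology

theorem limsup_le_of_eventuallyLE_of_tendsto {α : Type*} {f : Filter α} {u v : α → ℝ} {a : ℝ}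
    (ha : 0 ≤ a) (hvu : v ≤ᶠ[f] u) (hu : Tendsto u f (𝓝 a)) : limsup v f ≤ a := by
  by_cases hv : f.IsCoboundedUnder (· ≤ ·) v
  · refine le_of_forall_gt_imp_ge_of_dense fun b hab => limsup_le_of_le hv ?_
    filter_upwards [hvu, hu.eventually_le_const hab] with x hvx hux using hvx.trans hux
  · -- Here the extended-real `limsup` is `-∞` and the real one takes the junk value `0`.
    rwa [Real.limsup_of_not_isCoboundedUnder hv]

theorem tendsto_zero_of_add_succ_le {a b : ℕ → ℝ} {N : ℕ} (ha : ∀ k, 0 ≤ a k)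
    (hb : BddBelow (Set.range b)) (hab : ∀ k ≥ N, a k + b (k + 1) ≤ b k) :
    Tendsto a atTop (𝓝 0) := by
  have hanti : Antitone fun k => b (k + N) := antitone_nat_of_succ_le fun k => by
    rw [Nat.add_right_comm]
    linarith [ha (k + N), hab (k + N) (Nat.le_add_left N k)]
  have hlim : Tendsto b atTop (𝓝 (⨅ k, b (k + N))) :=
    (tendsto_add_atTop_iff_nat N).1 <| tendsto_atTop_ciInf hanti <|
      hb.mono (Set.range_comp_subset_range (· + N) b)
  have hdiff : Tendsto (fun k => b k - b (k + 1)) atTop (𝓝 0) := by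
    simpa only [sub_self] using hlim.sub ((tendsto_add_atTop_iff_nat 1).2 hlim)
  refine tendsto_of_tendsto_of_tendsto_of_le_of_le' tendsto_const_nhds hdiff
    (Eventually.of_forall ha) ?_
  filter_upwards [eventually_ge_atTop N] with k hk using le_sub_iff_add_le.2 (hab k hk)

variable {H : Type*} [NormedAddCommGroup H] [InnerProductSpace ℝ H]

theorem convex_setOf_inner_add_const_nonpos (g : H) (c : ℝ) :
    Convex ℝ {q : H | ⟪g, q⟫_ℝ + c ≤ 0} := by
  simpa only [innerₛₗ_apply_apply, ← le_neg_iff_add_nonpos_right] using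
    convex_halfSpace_le (innerₛₗ ℝ g).isLinear (-c)

theorem inner_add_const_le_norm_mul_norm_sub {g x y : H} {c : ℝ} (hy : ⟪g, y⟫_ℝ + c ≤ 0) :
    ⟪g, x⟫_ℝ + c ≤ ‖g‖ * ‖x - y‖ :=
  calc ⟪g, x⟫_ℝ + c = ⟪g, x - y⟫_ℝ + (⟪g, y⟫_ℝ + c) := by rw [inner_sub_right]; ring
    _ ≤ ⟪g, x - y⟫_ℝ := add_le_of_nonpos_right hy
    _ ≤ ‖g‖ * ‖x - y‖ := real_inner_le_norm g (x - y)

theorem norm_sub_sq_add_norm_sub_sq_le_of_isMinOn {C : Set H} {x y s : H} (hC : Convex ℝ C)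
    (hy : y ∈ C) (hmin : IsMinOn (fun q => ‖x - q‖) C y) (hs : s ∈ C) :
    ‖x - y‖ ^ 2 + ‖y - s‖ ^ 2 ≤ ‖x - s‖ ^ 2 := by
  have hvar : ⟪x - y, s - y⟫_ℝ ≤ 0 :=
    (norm_eq_iInf_iff_real_inner_le_zero hC hy).1 (hmin.iInf_eq hy).symm s hs
  have hexpand : ‖x - s‖ ^ 2 = ‖x - y‖ ^ 2 - 2 * ⟪x - y, s - y⟫_ℝ + ‖y - s‖ ^ 2 := by
    rw [← sub_sub_sub_cancel_right x s y, norm_sub_sq_real, norm_sub_rev s y]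
  linarith

theorem tendsto_norm_sub_succ_of_isMinOn {C : ℕ → Set H} {p : ℕ → H} {s : H} {N : ℕ}
    (hC : ∀ k ≥ N, Convex ℝ (C k)) (hs : ∀ k ≥ N, s ∈ C k)
    (hmem : ∀ k ≥ N, p (k + 1) ∈ C k)
    (hmin : ∀ k ≥ N, IsMinOn (fun q => ‖p k - q‖) (C k) (p (k + 1))) :
    Tendsto (fun k => ‖p k - p (k + 1)‖) atTop (𝓝 0) := by
  have hbdd : BddBelow (Set.range fun k => ‖p k - s‖ ^ 2) :=
    ⟨0, Set.forall_mem_range.2 fun k => sq_nonneg ‖p k - s‖⟩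
  have hfejer : ∀ k ≥ N, ‖p k - p (k + 1)‖ ^ 2 + ‖p (k + 1) - s‖ ^ 2 ≤ ‖p k - s‖ ^ 2 := fun k hk =>
    norm_sub_sq_add_norm_sub_sq_le_of_isMinOn (hC k hk) (hmem k hk) (hmin k hk) (hs k hk)
  have hsq : Tendsto (fun k => ‖p k - p (k + 1)‖ ^ 2) atTop (𝓝 0) :=
    tendsto_zero_of_add_succ_le (fun k => sq_nonneg _) hbdd hfejer
  simpa only [Real.sqrt_sq (norm_nonneg _), Real.sqrt_zero] using hsq.sqrt

theorem limsup_separator_value_nonpos_general {C : ℕ → Set H} {g p : ℕ → H} {c : ℕ → ℝ} {M : ℝ}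
    {s : H} {N : ℕ} (hC : ∀ k ≥ N, Convex ℝ (C k)) (hs : ∀ k ≥ N, s ∈ C k)
    (hg : ∀ k ≥ N, ‖g k‖ ≤ M) (hsep : ∀ k ≥ N, ⟪g k, p (k + 1)⟫_ℝ + c k ≤ 0)
    (hmem : ∀ k ≥ N, p (k + 1) ∈ C k)
    (hmin : ∀ k ≥ N, IsMinOn (fun q => ‖p k - q‖) (C k) (p (k + 1))) :
    limsup (fun k => ⟪g k, p k⟫_ℝ + c k) atTop ≤ 0 := by
  have hbound : Tendsto (fun k => M * ‖p k - p (k + 1)‖) atTop (𝓝 0) := by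
    simpa only [mul_zero] using (tendsto_norm_sub_succ_of_isMinOn hC hs hmem hmin).const_mul M
  refine limsup_le_of_eventuallyLE_of_tendsto le_rfl ?_ hbound
  filter_upwards [eventually_ge_atTop N] with k hk
  calc ⟪g k, p k⟫_ℝ + c k ≤ ‖g k‖ * ‖p k - p (k + 1)‖ :=
        inner_add_const_le_norm_mul_norm_sub (hsep k hk)
    _ ≤ M * ‖p k - p (k + 1)‖ := by gcongr; exact hg k hk

end ProjectionSequences

/-- projections onto halfspaces `C_k = {p : ⟪g_k, p⟫ + c_k ≤ 0}` which all
contain a nonempty set `S`, with uniformly bounded normals `‖g_k‖ ≤ M`.  If `p^{k+1}` is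
the metric projection (nearest point) of `p^k` onto `C_k` for every `k ≥ 1`, then
`limsup_k (⟪g_k, p^k⟫ + c_k) ≤ 0`. -/
theorem limsup_separator_value_nonpos
    {H : Type*} [NormedAddCommGroup H] [InnerProductSpace ℝ H] [CompleteSpace H]
    (S : Set H) (hS : S.Nonempty)
    (g : ℕ → H) (c : ℕ → ℝ)
    (M : ℝ) (hM : 0 ≤ M) (hg : ∀ k ≥ 1, ‖g k‖ ≤ M)
    (hSC : ∀ k ≥ 1, ∀ s ∈ S, ⟪g k, s⟫_ℝ + c k ≤ 0)
    (p : ℕ → H)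
    (hmem : ∀ k ≥ 1, ⟪g k, p (k + 1)⟫_ℝ + c k ≤ 0)
    (hnearest : ∀ k ≥ 1, ∀ q : H, ⟪g k, q⟫_ℝ + c k ≤ 0 →
      ‖p k - p (k + 1)‖ ≤ ‖p k - q‖) :
    Filter.limsup (fun k => ⟪g k, p k⟫_ℝ + c k) Filter.atTop ≤ 0 := by
  obtain ⟨s, hs⟩ := hS
  exact limsup_separator_value_nonpos_general (C := fun k => {q | ⟪g k, q⟫_ℝ + c k ≤ 0})
    (fun k _ => convex_setOf_inner_add_const_nonpos (g k) (c k)) (fun k hk => hSC k hk s hs)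
    hg hmem hmem hnearest
end

section
/- Let 0 <= tau < 1, and let {r_k}_{k >= 1} and {b_k}_{k >= 1} be sequences of real numbers such that b_k -> 0 and r_{k+1} >= tau * r_k + b_k for all k >= 1. Then liminf_{k -> infinity} r_k >= 0. -/
/-!
If `b k ≥ (1 - τ) * c` eventually, then centering at `c`, the fixed point of
`x ↦ τ * x + (1 - τ) * c`, gives `r (k + 1) - c ≥ τ * (r k - c)` from some `N` on. Hence
`r (N + n) - c ≥ τ ^ n * (r N - c) → 0`, so `r` is eventually above every `a < c`. Letting `c`
increase to `liminf b / (1 - τ)` bounds `liminf r` from below.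
-/

open Filter Topology

lemma liminf_nonneg_of_liminf_coe_ereal_nonneg {α : Type*} {f : Filter α} {u : α → ℝ}
    (hu : 0 ≤ liminf (fun x ↦ (u x : EReal)) f) : 0 ≤ liminf u f := by
  by_cases hbdd : BddAbove {a | ∀ᶠ x in f, a ≤ u x}
  · refine le_of_forall_lt_imp_le_of_dense fun a ha ↦ le_liminf_of_le hbdd ?_
    filter_upwards [eventually_lt_of_lt_liminf ((EReal.coe_neg'.2 ha).trans_le hu)] with x hx
    exact EReal.coe_le_coe_iff.1 hx.le
  · -- Here `u` tends to `+∞`, and the real-valued `liminf` takes the junk value `0`.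
    rw [liminf_eq, Real.sSup_of_not_bddAbove hbdd]

section

variable {τ : ℝ} {r b : ℕ → ℝ}

lemma eventually_lt_of_eventually_mul_le_succ (hτ0 : 0 ≤ τ) (hτ1 : τ < 1)
    (hr : ∀ᶠ k in atTop, τ * r k ≤ r (k + 1)) {a : ℝ} (ha : a < 0) :
    ∀ᶠ k in atTop, a < r k := by
  obtain ⟨N, hN⟩ := eventually_atTop.1 hr
  have geom_lower_bound (n : ℕ) : τ ^ n * r N ≤ r (n + N) := by
    simpa only [zero_add] using geom_le (u := fun n ↦ r (n + N)) hτ0 n fun k _ ↦ by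
      simpa only [add_right_comm] using hN (k + N) (Nat.le_add_left N k)
  have geom_tendsto : Tendsto (fun n ↦ τ ^ n * r N) atTop (𝓝 0) := by
    simpa only [zero_mul] using
      (tendsto_pow_atTop_nhds_zero_of_lt_one hτ0 hτ1).mul_const (r N)
  rw [← map_add_atTop_eq_nat N, eventually_map]
  filter_upwards [geom_tendsto.eventually_const_lt ha] with n hn
  exact hn.trans_le (geom_lower_bound n)

lemma eventually_lt_of_quasi_ascent (hτ0 : 0 ≤ τ) (hτ1 : τ < 1) {a c : ℝ}
    (hb : ∀ᶠ k in atTop, (1 - τ) * c ≤ b k)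
    (hrec : ∀ᶠ k in atTop, τ * r k + b k ≤ r (k + 1)) (hac : a < c) :
    ∀ᶠ k in atTop, a < r k := by
  have centered : ∀ᶠ k in atTop, τ * (r k - c) ≤ r (k + 1) - c := by
    filter_upwards [hb, hrec] with k hbk hrk
    linarith
  filter_upwards [eventually_lt_of_eventually_mul_le_succ hτ0 hτ1 centered (sub_neg.2 hac)]
    with k hk
  exact (sub_lt_sub_iff_right c).1 hk

theorem liminf_nonneg_of_quasi_ascent_general (hτ0 : 0 ≤ τ) (hτ1 : τ < 1)
    (hrec : ∀ᶠ k in atTop, τ * r k + b k ≤ r (k + 1)) :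
    liminf (fun k ↦ (b k : EReal)) atTop / ((1 - τ : ℝ) : EReal) ≤
      liminf (fun k ↦ (r k : EReal)) atTop := by
  have one_sub_pos : (0 : EReal) < ((1 - τ : ℝ) : EReal) := EReal.coe_pos.2 (sub_pos.2 hτ1)
  refine EReal.ge_of_forall_gt_iff_ge.1 fun a ha ↦ ?_
  obtain ⟨c, hac, hc⟩ := EReal.lt_iff_exists_real_btwn.1 ha
  have eventually_le_b : ∀ᶠ k in atTop, (1 - τ) * c ≤ b k := by
    rw [EReal.lt_div_iff one_sub_pos (EReal.coe_ne_top _), mul_comm, ← EReal.coe_mul] at hc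
    filter_upwards [eventually_lt_of_lt_liminf hc] with k hk
    exact EReal.coe_le_coe_iff.1 hk.le
  refine le_liminf_of_le (h := ?_)
  filter_upwards [eventually_lt_of_quasi_ascent hτ0 hτ1 eventually_le_b hrec
    (EReal.coe_lt_coe_iff.1 hac)] with k hk
  exact EReal.coe_le_coe_iff.2 hk.le

end

/-- if `0 ≤ τ < 1`, `b_k → 0`, and `r_{k+1} ≥ τ r_k + b_k` for all `k ≥ 1`,
then `liminf_k r_k ≥ 0`. -/
theorem liminf_nonneg_of_quasi_ascent
    (τ : ℝ) (hτ0 : 0 ≤ τ) (hτ1 : τ < 1)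
    (r b : ℕ → ℝ)
    (hb : Filter.Tendsto b Filter.atTop (nhds 0))
    (hrec : ∀ k ≥ 1, r (k + 1) ≥ τ * r k + b k) :
    0 ≤ Filter.liminf r Filter.atTop := by
  apply liminf_nonneg_of_liminf_coe_ereal_nonneg
  simpa only [(EReal.tendsto_coe.2 hb).liminf_eq, EReal.coe_zero, EReal.zero_div] using
    liminf_nonneg_of_quasi_ascent_general hτ0 hτ1 (eventually_atTop.2 ⟨1, hrec⟩)
end

section
/- Let H and H' be real Hilbert spaces, let G : H' -> H be bounded and linear, let A be a monotone set-valued operator on H, and let B : H -> H. Fix alpha in [0,1] and rho > 0, and suppose either (i) B is L^{-1}-cocoercive with L > 0 and rho <= 2(1 - alpha)/L, or (ii) B is constant. Fix z in H', and x, w in H, and set t = (1 - alpha)x + alpha*Gz - rho*(Bx - w). Suppose x^+ in H and a^+ in A x^+ satisfy x^+ + rho*a^+ = t (that is, x^+ is a value of the resolvent J_{rho A} at t). Then for every theta in the domain of A and every a-hat in A(theta), setting w-hat = a-hat + B(theta), one has ||x^+ - theta|| <= (1 - alpha)||x - theta|| + alpha*||Gz - theta|| + rho*||w - w-hat||. 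-/
open scoped InnerProductSpace

/-!
Monotonicity of `A` gives `‖x⁺ - θ‖ ≤ ‖(x⁺ - θ) + ρ(a⁺ - â)‖`, and the definition of `x⁺` splits the
vector on the right as `((1-α)(x - θ) - ρ(Bx - Bθ)) + α(Gz - θ) + ρ(w - ŵ)`. The stepsize bound
makes the first summand no longer than `(1-α)(x - θ)`: when its square is expanded, cocoercivity
lets the cross term absorb `ρ²‖Bx - Bθ‖²`.
-/

section

variable {H : Type*} [SeminormedAddCommGroup H] [InnerProductSpace ℝ H]

theorem norm_le_norm_add_of_inner_nonneg {u v : H} (huv : 0 ≤ ⟪u, v⟫_ℝ) : ‖u‖ ≤ ‖u + v‖ := by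
  refine le_of_sq_le_sq ?_ (norm_nonneg _)
  rw [norm_add_sq_real]
  linarith [sq_nonneg ‖v‖]

theorem norm_smul_sub_smul_le_of_mul_norm_sq_le {c ρ : ℝ} {u v : H} (hc : 0 ≤ c) (hρ : 0 ≤ ρ)
    (huv : ρ * ‖v‖ ^ 2 ≤ 2 * c * ⟪v, u⟫_ℝ) : ‖c • u - ρ • v‖ ≤ c * ‖u‖ := by
  refine le_of_sq_le_sq ?_ (by positivity)
  calc ‖c • u - ρ • v‖ ^ 2
      = (c * ‖u‖) ^ 2 + ρ * (ρ * ‖v‖ ^ 2 - 2 * c * ⟪v, u⟫_ℝ) := by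
        rw [norm_sub_sq_real, norm_smul_of_nonneg hc, norm_smul_of_nonneg hρ,
          real_inner_smul_left, real_inner_smul_right, real_inner_comm]
        ring
    _ ≤ (c * ‖u‖) ^ 2 :=
        add_le_of_nonpos_right (mul_nonpos_of_nonneg_of_nonpos hρ (sub_nonpos.2 huv))

theorem mul_norm_sq_le_of_cocoercive {β c ρ : ℝ} {u v : H} (hc : 0 ≤ c)
    (huv : β * ‖v‖ ^ 2 ≤ ⟪v, u⟫_ℝ) (hρ : ρ ≤ 2 * c * β) : ρ * ‖v‖ ^ 2 ≤ 2 * c * ⟪v, u⟫_ℝ :=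
  calc ρ * ‖v‖ ^ 2 ≤ 2 * c * β * ‖v‖ ^ 2 := by gcongr
    _ = 2 * c * (β * ‖v‖ ^ 2) := mul_assoc _ _ _
    _ ≤ 2 * c * ⟪v, u⟫_ℝ := by gcongr

/-- Here `y`, `a`, `aθ`, `b`, `bθ` stand for `Gz`, `a⁺`, `â`, `Bx`, `Bθ`. Condition `hb` is what
cocoercive and constant `B` have in common. -/
theorem one_forward_step_contractive_general {α ρ : ℝ} {x y w xp θ a aθ b bθ : H}
    (hα0 : 0 ≤ α) (hα1 : α ≤ 1) (hρ : 0 ≤ ρ)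
    (ha : 0 ≤ ⟪a - aθ, xp - θ⟫_ℝ)
    (hb : ρ * ‖b - bθ‖ ^ 2 ≤ 2 * (1 - α) * ⟪b - bθ, x - θ⟫_ℝ)
    (hres : xp + ρ • a = (1 - α) • x + α • y - ρ • (b - w)) :
    ‖xp - θ‖ ≤ (1 - α) * ‖x - θ‖ + α * ‖y - θ‖ + ρ * ‖w - (aθ + bθ)‖ := by
  have inner_nonneg : 0 ≤ ⟪xp - θ, ρ • (a - aθ)⟫_ℝ := by
    rw [real_inner_smul_right, real_inner_comm]
    exact mul_nonneg hρ ha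
  have decomposition : xp - θ + ρ • (a - aθ) =
      ((1 - α) • (x - θ) - ρ • (b - bθ)) + α • (y - θ) + ρ • (w - (aθ + bθ)) := by
    linear_combination (norm := module) hres
  calc ‖xp - θ‖
      ≤ ‖xp - θ + ρ • (a - aθ)‖ := norm_le_norm_add_of_inner_nonneg inner_nonneg
    _ ≤ ‖(1 - α) • (x - θ) - ρ • (b - bθ)‖ + ‖α • (y - θ)‖ + ‖ρ • (w - (aθ + bθ))‖ := by
        rw [decomposition]
        exact norm_add₃_le
    _ ≤ (1 - α) * ‖x - θ‖ + α * ‖y - θ‖ + ρ * ‖w - (aθ + bθ)‖ := by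
        rw [norm_smul_of_nonneg hα0, norm_smul_of_nonneg hρ]
        gcongr
        exact norm_smul_sub_smul_le_of_mul_norm_sq_le (sub_nonneg.2 hα1) hρ hb

end

/-- contractive lemma for the one-forward-step update: with `A` monotone,
`B` either `L⁻¹`-cocoercive with `ρ ≤ 2(1-α)/L` or constant, `α ∈ [0,1]`, `ρ > 0`,
`t = (1-α)x + α Gz - ρ(Bx - w)` and `x⁺ = J_{ρA}(t)` (i.e. `x⁺ + ρ a⁺ = t` for some
`a⁺ ∈ A x⁺`), one has for every `θ ∈ dom A`, `â ∈ A θ` and `ŵ = â + Bθ`: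
`‖x⁺ - θ‖ ≤ (1-α)‖x - θ‖ + α‖Gz - θ‖ + ρ‖w - ŵ‖`. -/
theorem one_forward_step_contractive
    {H H' : Type*} [NormedAddCommGroup H] [InnerProductSpace ℝ H]
    [NormedAddCommGroup H'] [InnerProductSpace ℝ H']
    (G : H' →L[ℝ] H)
    (A : H → Set H)
    (hA : ∀ x y a b, a ∈ A x → b ∈ A y → 0 ≤ ⟪a - b, x - y⟫_ℝ)
    (B : H → H)
    (α ρ : ℝ) (hα0 : 0 ≤ α) (hα1 : α ≤ 1) (hρ : 0 < ρ)
    (hB : (∃ L : ℝ, 0 < L ∧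
            (∀ x y, (1 / L) * ‖B x - B y‖ ^ 2 ≤ ⟪B x - B y, x - y⟫_ℝ) ∧
            ρ ≤ 2 * (1 - α) / L)
          ∨ (∃ v, ∀ x, B x = v))
    (z : H') (x w : H)
    (t : H) (ht : t = (1 - α) • x + α • G z - ρ • (B x - w))
    (xp ap : H) (hap : ap ∈ A xp) (hres : xp + ρ • ap = t)
    (θ ahat : H) (hahat : ahat ∈ A θ) :
    ‖xp - θ‖ ≤ (1 - α) * ‖x - θ‖ + α * ‖G z - θ‖ + ρ * ‖w - (ahat + B θ)‖ := by
  refine one_forward_step_contractive_general hα0 hα1 hρ.le (hA _ _ _ _ hap hahat) ?_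
    (hres.trans ht)
  rcases hB with ⟨L, -, hcoco, hρL⟩ | ⟨v, hconst⟩
  · exact mul_norm_sq_le_of_cocoercive (sub_nonneg.2 hα1) (hcoco x θ) (by rwa [mul_one_div])
  · simp [hconst]
end

section
/- Let H and H' be real Hilbert spaces, let G : H' -> H be bounded and linear, let A be a monotone set-valued operator on H, and let B : H -> H be L^{-1}-cocoercive with L > 0. Fix alpha in (0,1] and rho > 0 with rho <= 2(1 - alpha)/L. Fix z in H', and x, w in H. Let a in A x and set y = a + Bx. Set t = (1 - alpha)x + alpha*Gz - rho*(Bx - w), and suppose x^+ in H and a^+ in A x^+ satisfy x^+ + rho*a^+ = t. Set y^+ = a^+ + B x^+ and y-hat = a^+ + Bx. Then <Gz - x^+, y^+ - w> >= (rho/(2 alpha)) * ( ||y^+ - w||^2 + alpha * ||y-hat - w||^2 ) + (1 - alpha) * ( <Gz - x, y - w> - (rho/(2 alpha)) * ||y - w||^2 ). -/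
open scoped InnerProductSpace

/-!
Write `s = x⁺ - x` and `p = ŷ - w`. The resolvent equation says that `α (Gz - x) = s + ρ p`, hence
also `α (Gz - x⁺) = (1 - α) s + ρ p`. Polarizing `⟪p, ·⟫` in both separator values turns the ascent
inequality, multiplied by `α`, into an identity with remainder
`(1 - α) ⟪s, y⁺ - y⟫ + ρ / 2 * ((1 - α) ‖y - ŷ‖² - ‖y⁺ - ŷ‖²)`.
Since `y⁺ - ŷ = Bx⁺ - Bx`, monotonicity of `A` and cocoercivity of `B` make the first term absorb
the only negative one.
-/

section RelaxedStep

variable {H : Type*} [SeminormedAddCommGroup H] [InnerProductSpace ℝ H]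

lemma mul_inner_eq_of_smul_eq_add_smul {α ρ : ℝ} {v s p : H} (hv : α • v = s + ρ • p) (q : H) :
    α * ⟪v, q⟫_ℝ = ⟪s, q⟫_ℝ + ρ / 2 * (‖p‖ ^ 2 + ‖q‖ ^ 2 - ‖q - p‖ ^ 2) := by
  rw [← real_inner_smul_left, hv, inner_add_left, real_inner_smul_left, norm_sub_sq_real,
    real_inner_comm p q]
  ring

lemma mul_separator_sub_eq {α ρ : ℝ} {g x xp w yhat : H}
    (hstep : α • (g - x) = (xp - x) + ρ • (yhat - w)) (y yp : H) :
    α * (⟪g - xp, yp - w⟫_ℝ - (1 - α) * ⟪g - x, y - w⟫_ℝ)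
      = ρ / 2 * (‖yp - w‖ ^ 2 + α * ‖yhat - w‖ ^ 2 - (1 - α) * ‖y - w‖ ^ 2)
        + ((1 - α) * ⟪xp - x, yp - y⟫_ℝ
          + ρ / 2 * ((1 - α) * ‖y - yhat‖ ^ 2 - ‖yp - yhat‖ ^ 2)) := by
  have hstep' : α • (g - xp) = (1 - α) • (xp - x) + ρ • (yhat - w) := by
    linear_combination (norm := module) hstep
  have hold := mul_inner_eq_of_smul_eq_add_smul hstep (y - w)
  have hnew := mul_inner_eq_of_smul_eq_add_smul hstep' (yp - w)
  rw [sub_sub_sub_cancel_right] at hold hnew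
  rw [real_inner_smul_left] at hnew
  have hinner : ⟪xp - x, yp - y⟫_ℝ = ⟪xp - x, yp - w⟫_ℝ - ⟪xp - x, y - w⟫_ℝ := by
    rw [← inner_sub_right, sub_sub_sub_cancel_right]
  rw [hinner]
  linear_combination hnew - (1 - α) * hold

lemma separator_ascent_of_relaxed_step {α ρ : ℝ} (hα0 : 0 < α) (hα1 : α ≤ 1) (hρ : 0 ≤ ρ)
    {g x xp w y yp yhat : H} (hstep : α • (g - x) = (xp - x) + ρ • (yhat - w))
    (hinner : ρ / 2 * ‖yp - yhat‖ ^ 2 ≤ (1 - α) * ⟪xp - x, yp - y⟫_ℝ) :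
    ρ / (2 * α) * (‖yp - w‖ ^ 2 + α * ‖yhat - w‖ ^ 2)
        + (1 - α) * (⟪g - x, y - w⟫_ℝ - ρ / (2 * α) * ‖y - w‖ ^ 2)
      ≤ ⟪g - xp, yp - w⟫_ℝ := by
  have hnonneg : 0 ≤ ρ / 2 * ((1 - α) * ‖y - yhat‖ ^ 2) := by
    have := sub_nonneg.2 hα1
    positivity
  have hcoeff : α * (ρ / (2 * α)) = ρ / 2 := by field_simp
  refine le_of_mul_le_mul_left ?_ hα0
  linear_combination hnonneg + hinner - mul_separator_sub_eq hstep y yp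
    + (‖yp - w‖ ^ 2 + α * ‖yhat - w‖ ^ 2 - (1 - α) * ‖y - w‖ ^ 2) * hcoeff

lemma half_mul_norm_sq_le_of_monotone_of_cocoercive {α ρ β : ℝ} (hα1 : α ≤ 1)
    (hρβ : ρ ≤ 2 * (1 - α) * β) {s e d : H} (hmono : 0 ≤ ⟪e, s⟫_ℝ)
    (hcoco : β * ‖d‖ ^ 2 ≤ ⟪d, s⟫_ℝ) :
    ρ / 2 * ‖d‖ ^ 2 ≤ (1 - α) * ⟪s, e + d⟫_ℝ :=
  calc ρ / 2 * ‖d‖ ^ 2 ≤ (1 - α) * β * ‖d‖ ^ 2 := by gcongr; linarith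
    _ = (1 - α) * (β * ‖d‖ ^ 2) := mul_assoc _ _ _
    _ ≤ (1 - α) * ⟪s, e + d⟫_ℝ := by
      have := sub_nonneg.2 hα1
      gcongr
      rw [real_inner_comm, inner_add_left]
      linarith

theorem one_forward_step_ascent_cocoercive_general {α ρ β : ℝ} (hα0 : 0 < α) (hα1 : α ≤ 1)
    (hρ : 0 ≤ ρ) (hρβ : ρ ≤ 2 * (1 - α) * β) {g w x xp a ap b bp : H}
    (hmono : 0 ≤ ⟪ap - a, xp - x⟫_ℝ) (hcoco : β * ‖bp - b‖ ^ 2 ≤ ⟪bp - b, xp - x⟫_ℝ)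
    (hres : xp + ρ • ap = (1 - α) • x + α • g - ρ • (b - w)) :
    ρ / (2 * α) * (‖ap + bp - w‖ ^ 2 + α * ‖ap + b - w‖ ^ 2)
        + (1 - α) * (⟪g - x, a + b - w⟫_ℝ - ρ / (2 * α) * ‖a + b - w‖ ^ 2)
      ≤ ⟪g - xp, ap + bp - w⟫_ℝ := by
  have hstep : α • (g - x) = (xp - x) + ρ • (ap + b - w) := by
    linear_combination (norm := module) -hres
  refine separator_ascent_of_relaxed_step hα0 hα1 hρ hstep ?_
  rw [add_sub_add_left_eq_sub, add_sub_add_comm]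
  exact half_mul_norm_sq_le_of_monotone_of_cocoercive hα1 hρβ hmono hcoco

end RelaxedStep

/-- ascent lemma, cocoercive case: with `A` monotone and `B`
`L⁻¹`-cocoercive (`L > 0`), `α ∈ (0,1]`, `0 < ρ ≤ 2(1-α)/L`, `a ∈ Ax`, `y = a + Bx`,
`t = (1-α)x + α Gz - ρ(Bx - w)`, `x⁺ + ρ a⁺ = t` with `a⁺ ∈ A x⁺`, `y⁺ = a⁺ + Bx⁺`,
`ŷ = a⁺ + Bx`, the new separator value satisfies
`⟪Gz - x⁺, y⁺ - w⟫ ≥ (ρ/2α)(‖y⁺ - w‖² + α‖ŷ - w‖²) + (1-α)(⟪Gz - x, y - w⟫ - (ρ/2α)‖y - w‖²)`. -/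
theorem one_forward_step_ascent_cocoercive
    {H H' : Type*} [NormedAddCommGroup H] [InnerProductSpace ℝ H]
    [NormedAddCommGroup H'] [InnerProductSpace ℝ H']
    (G : H' →L[ℝ] H)
    (A : H → Set H)
    (hA : ∀ x y a b, a ∈ A x → b ∈ A y → 0 ≤ ⟪a - b, x - y⟫_ℝ)
    (L : ℝ) (hL : 0 < L) (B : H → H)
    (hB : ∀ x y, (1 / L) * ‖B x - B y‖ ^ 2 ≤ ⟪B x - B y, x - y⟫_ℝ)
    (α ρ : ℝ) (hα0 : 0 < α) (hα1 : α ≤ 1) (hρ : 0 < ρ) (hρL : ρ ≤ 2 * (1 - α) / L)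
    (z : H') (x w : H)
    (a : H) (ha : a ∈ A x) (y : H) (hy : y = a + B x)
    (t : H) (ht : t = (1 - α) • x + α • G z - ρ • (B x - w))
    (xp ap : H) (hap : ap ∈ A xp) (hres : xp + ρ • ap = t)
    (yp : H) (hyp : yp = ap + B xp)
    (yhat : H) (hyhat : yhat = ap + B x) :
    ⟪G z - xp, yp - w⟫_ℝ
      ≥ (ρ / (2 * α)) * (‖yp - w‖ ^ 2 + α * ‖yhat - w‖ ^ 2)
        + (1 - α) * (⟪G z - x, y - w⟫_ℝ - (ρ / (2 * α)) * ‖y - w‖ ^ 2) := by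
  subst hy hyp hyhat
  exact one_forward_step_ascent_cocoercive_general hα0 hα1 hρ.le (hρL.trans_eq (by ring))
    (hA _ _ _ _ hap ha) (hB _ _) (hres.trans ht)
end

section
/- Let H and H' be real Hilbert spaces, let G : H' -> H be bounded and linear, let A be a monotone set-valued operator on H, and let B : H -> H be a constant operator, i.e. there is v in H with Bx = v for all x in H. Fix alpha in (0,1] and rho > 0. Fix z in H', and x, w in H. Let a in A x and set y = a + v. Set t = (1 - alpha)x + alpha*Gz - rho*(v - w), and suppose x^+ in H and a^+ in A x^+ satisfy x^+ + rho*a^+ = t. Set y^+ = a^+ + v. Then <Gz - x^+, y^+ - w> >= (rho*(1 + alpha)/(2 alpha)) * ||y^+ - w||^2 + (1 - alpha) * ( <Gz - x, y - w> - (rho/(2 alpha)) * ||y - w||^2 ). -/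
open scoped InnerProductSpace

/-!
Write `g = G z`, `u = g - x`, `p = y⁺ - w` and `q = y - w`. The step says `x⁺ - x = α u - ρ p`, so
monotonicity becomes `⟪p - q, u - (ρ / α) p⟫ ≥ 0`. Here `u - (ρ / α) p` is the gradient at `p` of
the concave quadratic `r ↦ ⟪u, r⟫ - (ρ / (2 α)) ‖r‖²`, so the value of this quadratic at `p` is at
least its value at `q`. Moreover `g - x⁺ = (1 - α) u + ρ p`, and `⟪g - x⁺, p⟫` is `1 - α` times the
value at `p` plus `ρ (1 + α) / (2 α) ‖p‖²`.
-/

section MonotoneStep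

variable {H : Type*} [SeminormedAddCommGroup H] [InnerProductSpace ℝ H]

theorem norm_sq_sub_norm_sq_le_two_mul_inner_sub (p q : H) :
    ‖p‖ ^ 2 - ‖q‖ ^ 2 ≤ 2 * ⟪p - q, p⟫_ℝ := by
  have polarization : ‖p - q‖ ^ 2 = 2 * ⟪p - q, p⟫_ℝ - (‖p‖ ^ 2 - ‖q‖ ^ 2) := by
    rw [norm_sub_sq_real, inner_sub_left, real_inner_self_eq_norm_sq, real_inner_comm p q]
    ring
  linarith [sq_nonneg ‖p - q‖]

theorem inner_sub_mul_norm_sq_le_of_inner_sub_smul_nonneg {c : ℝ} (hc : 0 ≤ c) {u p q : H}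
    (h : 0 ≤ ⟪p - q, u - c • p⟫_ℝ) :
    ⟪u, q⟫_ℝ - c / 2 * ‖q‖ ^ 2 ≤ ⟪u, p⟫_ℝ - c / 2 * ‖p‖ ^ 2 := by
  have gradient_split : ⟪p - q, u - c • p⟫_ℝ = ⟪u, p⟫_ℝ - ⟪u, q⟫_ℝ - c * ⟪p - q, p⟫_ℝ := by
    rw [inner_sub_right, real_inner_smul_right, real_inner_comm, inner_sub_right]
  linarith [mul_le_mul_of_nonneg_left (norm_sq_sub_norm_sq_le_two_mul_inner_sub p q) hc]

theorem inner_one_sub_smul_add_smul_self {α : ℝ} (hα : α ≠ 0) (ρ : ℝ) (u p : H) :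
    ⟪(1 - α) • u + ρ • p, p⟫_ℝ
      = ρ * (1 + α) / (2 * α) * ‖p‖ ^ 2
        + (1 - α) * (⟪u, p⟫_ℝ - ρ / (2 * α) * ‖p‖ ^ 2) := by
  rw [inner_add_left, real_inner_smul_left, real_inner_smul_left, real_inner_self_eq_norm_sq]
  field_simp
  ring

theorem one_forward_step_ascent_constant_general {α ρ : ℝ} (hα0 : 0 < α) (hα1 : α ≤ 1)
    (hρ : 0 ≤ ρ) {g x w y xp yp : H} (hmono : 0 ≤ ⟪yp - y, xp - x⟫_ℝ)
    (hstep : xp + ρ • yp = (1 - α) • x + α • g + ρ • w) :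
    ρ * (1 + α) / (2 * α) * ‖yp - w‖ ^ 2
        + (1 - α) * (⟪g - x, y - w⟫_ℝ - ρ / (2 * α) * ‖y - w‖ ^ 2)
      ≤ ⟪g - xp, yp - w⟫_ℝ := by
  have residual : g - xp = (1 - α) • (g - x) + ρ • (yp - w) := by
    linear_combination (norm := module) -hstep
  have displacement : xp - x = α • ((g - x) - (ρ / α) • (yp - w)) := by
    rw [smul_sub, smul_smul, mul_div_cancel₀ _ hα0.ne']
    linear_combination (norm := module) hstep
  have gradient_nonneg : 0 ≤ ⟪(yp - w) - (y - w), (g - x) - (ρ / α) • (yp - w)⟫_ℝ := by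
    rw [displacement, real_inner_smul_right] at hmono
    simpa only [sub_sub_sub_cancel_right] using nonneg_of_mul_nonneg_right hmono hα0
  have ascent : ⟪g - x, y - w⟫_ℝ - ρ / (2 * α) * ‖y - w‖ ^ 2
      ≤ ⟪g - x, yp - w⟫_ℝ - ρ / (2 * α) * ‖yp - w‖ ^ 2 := by
    simpa only [div_div, mul_comm α 2] using
      inner_sub_mul_norm_sq_le_of_inner_sub_smul_nonneg (div_nonneg hρ hα0.le) gradient_nonneg
  rw [residual, inner_one_sub_smul_add_smul_self hα0.ne']
  gcongr

end MonotoneStep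

/-- ascent lemma, constant case: with `A` monotone and `B ≡ v` constant,
`α ∈ (0,1]`, `ρ > 0`, `a ∈ Ax`, `y = a + v`, `t = (1-α)x + α Gz - ρ(v - w)`,
`x⁺ + ρ a⁺ = t` with `a⁺ ∈ A x⁺`, and `y⁺ = a⁺ + v`, one has
`⟪Gz - x⁺, y⁺ - w⟫ ≥ (ρ(1+α)/2α)‖y⁺ - w‖² + (1-α)(⟪Gz - x, y - w⟫ - (ρ/2α)‖y - w‖²)`. -/
theorem one_forward_step_ascent_constant
    {H H' : Type*} [NormedAddCommGroup H] [InnerProductSpace ℝ H]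
    [NormedAddCommGroup H'] [InnerProductSpace ℝ H']
    (G : H' →L[ℝ] H)
    (A : H → Set H)
    (hA : ∀ x y a b, a ∈ A x → b ∈ A y → 0 ≤ ⟪a - b, x - y⟫_ℝ)
    (B : H → H) (v : H) (hBv : ∀ x, B x = v)
    (α ρ : ℝ) (hα0 : 0 < α) (hα1 : α ≤ 1) (hρ : 0 < ρ)
    (z : H') (x w : H)
    (a : H) (ha : a ∈ A x) (y : H) (hy : y = a + v)
    (t : H) (ht : t = (1 - α) • x + α • G z - ρ • (v - w))
    (xp ap : H) (hap : ap ∈ A xp) (hres : xp + ρ • ap = t)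
    (yp : H) (hyp : yp = ap + v) :
    ⟪G z - xp, yp - w⟫_ℝ
      ≥ (ρ * (1 + α) / (2 * α)) * ‖yp - w‖ ^ 2
        + (1 - α) * (⟪G z - x, y - w⟫_ℝ - (ρ / (2 * α)) * ‖y - w‖ ^ 2) := by
  subst hy hyp ht
  exact one_forward_step_ascent_constant_general hα0 hα1 hρ.le
    (by simpa only [add_sub_add_right_eq_sub] using hA xp x ap a hap ha)
    (by linear_combination (norm := module) hres)
end

section
/- Let H_0, H_1, ..., H_{n-1} be real Hilbert spaces, set H_n = H_0, let G_i : H_0 -> H_i be bounded linear for i = 1, ..., n-1, with G_n the identity on H_0. For each i = 1, ..., n, let A_i be a maximal monotone set-valued operator on H_i, and let B_i : H_i -> H_i be defined on all of H_i and either L_i^{-1}-cocoercive with L_i > 0, or constant (in which case put L_i = 0). Set T_i = A_i + B_i and assume the extended solution set S is nonempty. Fix gamma > 0 and, for each i, alpha_i in (0,1] and rho_i > 0 such that rho_i <= 2(1 - alpha_i)/L_i whenever L_i > 0. Let z^1 in H_0, w_i^1 in H_i (i = 1, ..., n-1), and x_i^0 in H_i be arbitrary, and write w_n^k = -sum_{i=1}^{n-1}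 G_i^* w_i^k for all k. Suppose that for every k >= 1 the following updates hold: for each i = 1, ..., n there exists a_i^k in A_i x_i^k with x_i^k + rho_i * a_i^k = (1 - alpha_i) x_i^{k-1} + alpha_i * G_i z^k - rho_i * (B_i x_i^{k-1} - w_i^k), and y_i^k = a_i^k + B_i x_i^k; then, setting u_i^k = x_i^k - G_i x_n^k for i = 1, ..., n-1, v^k = sum_{i=1}^{n-1} G_i^* y_i^k + y_n^k, and pi_k = sum_{i=1}^{n-1} ||u_i^k||^2 + gamma^{-1} ||v^k||^2, assume pi_k > 0, and define tau_k = max{0, phi_k(z^k, w_1^k, ..., w_{n-1}^k)} / pi_k where phi_k(z, w_1, ..., w_{n-1}) = sum_{i=1}^n <G_i z - x_i^k, y_i^k - w_i> (with w_n = -sum_{i=1}^{n-1} G_i^* w_i), and set z^{k+1} = z^k - gamma^{-1} tau_k v^k and w_i^{k+1} = w_i^k - tau_k u_i^k for i = 1, ..., n-1. Then there exists a point (z-bar, w-bar_1, ..., w-bar_{n-1}) in S such that (z^k, w_1^k, ..., w_{n-1}^k) converges weakly to (z-bar, w-bar_1, ..., w-bar_{n-1}); moreover x_i^k converges weakly to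 G_i z-bar and y_i^k converges weakly to w-bar_i for i = 1, ..., n-1, x_n^k converges weakly to z-bar, and y_n^k converges weakly to -sum_{i=1}^{n-1} G_i^* w-bar_i. -/
open scoped InnerProductSpace

/-!
Every step replaces the primal-dual pair `(z, w)` by its projection, in the `γ`-weighted metric,
onto a half-space containing the extended solution set. Hence the pairs are Fejér monotone,
successive differences tend to zero, and so does the positive part of the separating function `φ_k`
at the current pair, because its gradients stay bounded.

A single block update contracts towards every point of the graph of `T_i` up to an error measured by
its inputs `G_i z` and `w_i`. Comparing with a solution bounds the block iterates; comparing with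
the previous iterate shows that `α_i (x_i - G_i z) + ρ_i (y_i - w_i)` tends to zero. The positive
terms `(α_i / ρ_i) ‖x_i - G_i z‖ ^ 2` then add up to `φ_k` plus a vanishing error, so `x_i - G_i z`
and `y_i - w_i` tend to zero. Maximal monotonicity puts every weak cluster point of `(z, w)` in the
extended solution set, and Opial's lemma gives weak convergence.
-/

namespace ProjectiveSplitting

open Filter Topology Asymptotics

section RealSequences

lemma exists_forall_le_of_le_mul_add {u : ℕ → ℝ} {q K : ℝ} (hq0 : 0 ≤ q) (hq1 : q < 1)
    (h : ∀ k, u (k + 1) ≤ q * u k + K) : ∃ C, ∀ k, u k ≤ C := by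
  refine ⟨max (u 0) (K / (1 - q)), fun k ↦ ?_⟩
  induction k with
  | zero => exact le_max_left _ _
  | succ k ih =>
    have hK : K ≤ max (u 0) (K / (1 - q)) * (1 - q) :=
      (div_le_iff₀ (sub_pos.2 hq1)).1 (le_max_right _ _)
    linarith [h k, mul_le_mul_of_nonneg_left ih hq0]

lemma tendsto_zero_of_le_mul_add {u e : ℕ → ℝ} {q : ℝ} (hq0 : 0 ≤ q) (hq1 : q < 1)
    (hu : ∀ k, 0 ≤ u k) (h : ∀ k, u (k + 1) ≤ q * u k + e k) (he : Tendsto e atTop (𝓝 0)) :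
    Tendsto u atTop (𝓝 0) := by
  refine tendsto_order.2 ⟨fun a ha ↦ .of_forall fun k ↦ ha.trans_le (hu k), fun ε hε ↦ ?_⟩
  obtain ⟨N, hN⟩ : ∃ N, ∀ k ≥ N, e k < (1 - q) * (ε / 2) :=
    eventually_atTop.1 (he.eventually_lt_const (mul_pos (sub_pos.2 hq1) (half_pos hε)))
  have hgeom (j : ℕ) : u (j + N) - ε / 2 ≤ q ^ j * (u (0 + N) - ε / 2) :=
    le_geom (u := fun j ↦ u (j + N) - ε / 2) hq0 j fun i _ ↦ by
      rw [add_right_comm i 1 N]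
      linarith [h (i + N), hN (i + N) (Nat.le_add_left N i)]
  have hlim : Tendsto (fun j ↦ q ^ j * (u (0 + N) - ε / 2)) atTop (𝓝 0) := by
    simpa using (tendsto_pow_atTop_nhds_zero_of_lt_one hq0 hq1).mul_const (u (0 + N) - ε / 2)
  have hshift : ∀ᶠ j in atTop, u (j + N) < ε := by
    filter_upwards [hlim.eventually_lt_const (half_pos hε)] with j hj
    linarith [hgeom j]
  rw [← map_add_atTop_eq_nat N]
  exact hshift

end RealSequences

section WeakConvergence

variable {κ E F : Type*} [NormedAddCommGroup E] [InnerProductSpace ℝ E]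
  [NormedAddCommGroup F] [InnerProductSpace ℝ F]

/-- Weak convergence of `f` to `p` along the filter `l`, tested against the vectors of the space
itself: in a Hilbert space these are all the continuous functionals. -/
def WeakTendsto (f : κ → E) (l : Filter κ) (p : E) : Prop :=
  ∀ q, Tendsto (fun k ↦ ⟪f k, q⟫_ℝ) l (𝓝 ⟪p, q⟫_ℝ)

variable {l : Filter κ} {f g : κ → E} {p q : E}

lemma WeakTendsto.congr_of_sub (hg : WeakTendsto g l p)
    (h : Tendsto (fun k ↦ f k - g k) l (𝓝 0)) : WeakTendsto f l p := fun q ↦ by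
  simpa [inner_sub_left] using (h.inner (tendsto_const_nhds (x := q))).add (hg q)

lemma WeakTendsto.of_succ {f : ℕ → E} (hf : WeakTendsto (fun k ↦ f (k + 1)) atTop p) :
    WeakTendsto f atTop p := fun q ↦ (tendsto_add_atTop_iff_nat 1).1 (hf q)

lemma WeakTendsto.sub (hf : WeakTendsto f l p) (hg : WeakTendsto g l q) :
    WeakTendsto (fun k ↦ f k - g k) l (p - q) := fun r ↦ by
  simpa only [inner_sub_left] using (hf r).sub (hg r)

lemma WeakTendsto.tendsto_inner_sub_left (hf : WeakTendsto f l p) (r : E) :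
    Tendsto (fun k ↦ ⟪f k - p, r⟫_ℝ) l (𝓝 0) := by
  simpa only [inner_sub_left, sub_self] using (hf r).sub_const ⟪p, r⟫_ℝ

lemma WeakTendsto.map [CompleteSpace E] [CompleteSpace F] (T : E →L[ℝ] F)
    (hf : WeakTendsto f l p) : WeakTendsto (fun k ↦ T (f k)) l (T p) := fun q ↦ by
  simpa only [ContinuousLinearMap.adjoint_inner_right] using hf (T.adjoint q)

lemma weakTendsto_neg_sum {ι : Type*} [Fintype ι] {f : ι → κ → E} {p : ι → E}
    (hf : ∀ i, WeakTendsto (f i) l (p i)) :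
    WeakTendsto (fun k ↦ -∑ i, f i k) l (-∑ i, p i) := fun q ↦ by
  simpa only [inner_neg_left, sum_inner] using (tendsto_finsetSum _ fun i _ ↦ hf i q).neg

lemma isBigO_one_inner (hf : f =O[l] (1 : κ → ℝ)) (hg : g =O[l] (1 : κ → ℝ)) :
    (fun k ↦ ⟪f k, g k⟫_ℝ) =O[l] (1 : κ → ℝ) :=
  (isBoundedBilinearMap_inner (𝕜 := ℝ)).isBigO_comp.trans
    ((hf.norm_left.mul hg.norm_left).congr_right fun _ ↦ mul_one _)

lemma tendsto_inner_zero (hf : f =O[l] (1 : κ → ℝ)) (hg : Tendsto g l (𝓝 0)) :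
    Tendsto (fun k ↦ ⟪f k, g k⟫_ℝ) l (𝓝 0) := by
  have hg' : g =o[l] (1 : κ → ℝ) := (isLittleO_one_iff ℝ).2 hg
  refine (isLittleO_one_iff ℝ).1 ?_
  simpa using (isBoundedBilinearMap_inner (𝕜 := ℝ)).isBigO_comp.trans_isLittleO
    (hf.norm_left.mul_isLittleO hg'.norm_left)

lemma tendsto_zero_of_mul_norm_sq_le {G : Type*} [NormedAddCommGroup G] {f : κ → G} {e : κ → ℝ}
    {c : ℝ} (hc : 0 < c) (h : ∀ k, c * ‖f k‖ ^ 2 ≤ e k) (he : Tendsto e l (𝓝 0)) :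
    Tendsto f l (𝓝 0) := by
  have hsq : Tendsto (fun k ↦ ‖f k‖ ^ 2) l (𝓝 0) :=
    squeeze_zero (fun k ↦ sq_nonneg _) (fun k ↦ (le_div_iff₀' hc).2 (h k))
      (by simpa using he.div_const c)
  exact tendsto_zero_iff_norm_tendsto_zero.2 (by simpa using hsq.sqrt)

lemma exists_tendsto_of_isBigO_one {U : Ultrafilter κ} {f : κ → ℝ}
    (hf : f =O[U] (1 : κ → ℝ)) : ∃ r, Tendsto f U (𝓝 r) := by
  obtain ⟨C, hC⟩ := hf.bound
  have hmem : ∀ᶠ k in U, f k ∈ Metric.closedBall (0 : ℝ) C := by simpa using hC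
  obtain ⟨r, -, hr⟩ := (isCompact_closedBall (0 : ℝ) C).ultrafilter_le_nhds' (U.map f) hmem
  exact ⟨r, hr⟩

lemma exists_weakTendsto_of_isBigO_one [CompleteSpace E] {U : Ultrafilter κ}
    (hf : f =O[U] (1 : κ → ℝ)) : ∃ p, WeakTendsto f U p := by
  obtain ⟨C, hC⟩ := hf.bound
  let D (k : κ) : WeakDual ℝ E := StrongDual.toWeakDual (InnerProductSpace.toDual ℝ E (f k))
  have hmem : ∀ᶠ k in U, D k ∈ WeakDual.toStrongDual ⁻¹' Metric.closedBall 0 C := by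
    filter_upwards [hC] with k hk
    simpa [D] using hk
  obtain ⟨p, -, hp⟩ :=
    (WeakDual.isCompact_closedBall (𝕜 := ℝ) (E := E) 0 C).ultrafilter_le_nhds' (U.map D) hmem
  refine ⟨(InnerProductSpace.toDual ℝ E).symm (WeakDual.toStrongDual p), fun q ↦ ?_⟩
  rw [InnerProductSpace.toDual_symm_apply]
  exact ((WeakDual.eval_continuous (𝕜 := ℝ) q).tendsto p).comp hp

end WeakConvergence

section Fejer

variable {E : Type*} [NormedAddCommGroup E] [InnerProductSpace ℝ E]

lemma eq_of_weakTendsto_of_tendsto_norm_sub {p : ℕ → E} {l l₁ l₂ : Filter ℕ} [NeBot l₁] [NeBot l₂]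
    {s₁ s₂ : E} (hl₁ : l₁ ≤ l) (hl₂ : l₂ ≤ l) (hs₁ : WeakTendsto p l₁ s₁)
    (hs₂ : WeakTendsto p l₂ s₂) (hd₁ : ∃ d, Tendsto (fun k ↦ ‖p k - s₁‖) l (𝓝 d))
    (hd₂ : ∃ d, Tendsto (fun k ↦ ‖p k - s₂‖) l (𝓝 d)) : s₁ = s₂ := by
  obtain ⟨d₁, hd₁⟩ := hd₁
  obtain ⟨d₂, hd₂⟩ := hd₂
  have hpolar (k : ℕ) : ⟪p k, s₁ - s₂⟫_ℝ
      = (‖p k - s₂‖ ^ 2 - ‖p k - s₁‖ ^ 2 - (‖s₂‖ ^ 2 - ‖s₁‖ ^ 2)) / 2 := by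
    rw [norm_sub_sq_real, norm_sub_sq_real, inner_sub_right]
    ring
  obtain ⟨r, hr⟩ : ∃ r, Tendsto (fun k ↦ ⟪p k, s₁ - s₂⟫_ℝ) l (𝓝 r) :=
    ⟨_, by simpa only [hpolar] using (((hd₂.pow 2).sub (hd₁.pow 2)).sub_const _).div_const 2⟩
  have hinner : ⟪s₁, s₁ - s₂⟫_ℝ = ⟪s₂, s₁ - s₂⟫_ℝ :=
    (tendsto_nhds_unique (hs₁ _) (hr.mono_left hl₁)).trans
      (tendsto_nhds_unique (hs₂ _) (hr.mono_left hl₂)).symm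
  rw [← sub_eq_zero, ← inner_self_eq_zero (𝕜 := ℝ), inner_sub_left, hinner, sub_self]

/-- **Opial's lemma**, with weak limits along ultrafilters in the role of weak cluster points. -/
lemma exists_weakTendsto_of_tendsto_norm_sub {p : ℕ → E} {S : Set E}
    (hdist : ∀ s ∈ S, ∃ d, Tendsto (fun k ↦ ‖p k - s‖) atTop (𝓝 d))
    (hcluster : ∀ U : Ultrafilter ℕ, (U : Filter ℕ) ≤ atTop → ∃ s ∈ S, WeakTendsto p U s) :
    ∃ s ∈ S, WeakTendsto p atTop s := by
  obtain ⟨s, hsS, hs⟩ := hcluster (hyperfilter ℕ) Nat.hyperfilter_le_atTop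
  refine ⟨s, hsS, fun q ↦ tendsto_iff_ultrafilter _ _ _ |>.2 fun U hU ↦ ?_⟩
  obtain ⟨s', hs'S, hs'⟩ := hcluster U hU
  obtain rfl : s' = s := eq_of_weakTendsto_of_tendsto_norm_sub hU Nat.hyperfilter_le_atTop hs' hs
    (hdist s' hs'S) (hdist s hsS)
  exact hs' q

/-- The metric projection onto the half-space `{s | ⟪s, g⟫ ≤ c}`. For `g = 0` the division by zero
makes it the identity. -/
noncomputable def halfspaceProj (g : E) (c : ℝ) (p : E) : E :=
  p - (max 0 (⟪p, g⟫_ℝ - c) / ‖g‖ ^ 2) • g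

lemma norm_halfspaceProj_sub_sq_add_le {g s : E} {c : ℝ} (hs : ⟪s, g⟫_ℝ ≤ c) (p : E) :
    ‖halfspaceProj g c p - s‖ ^ 2 + ‖halfspaceProj g c p - p‖ ^ 2 ≤ ‖p - s‖ ^ 2 := by
  rcases eq_or_ne g 0 with rfl | hg
  · simp [halfspaceProj]
  set τ := max 0 (⟪p, g⟫_ℝ - c) / ‖g‖ ^ 2 with hτ
  have hτ0 : 0 ≤ τ := by positivity
  have hτg : τ * (τ * ‖g‖ ^ 2) ≤ τ * ⟪p - s, g⟫_ℝ := by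
    rcases le_total (⟪p, g⟫_ℝ - c) 0 with hle | hge
    · simp [hτ, max_eq_left hle]
    · have hmul : τ * ‖g‖ ^ 2 = ⟪p, g⟫_ℝ - c := by
        rw [hτ, max_eq_right hge, div_mul_cancel₀ _ (by simpa using hg)]
      rw [hmul, inner_sub_left]
      exact mul_le_mul_of_nonneg_left (sub_le_sub_left hs _) hτ0
  have hdist : ‖p - τ • g - s‖ ^ 2 = ‖p - s‖ ^ 2 - 2 * (τ * ⟪p - s, g⟫_ℝ) + τ ^ 2 * ‖g‖ ^ 2 := by
    rw [sub_right_comm, norm_sub_sq_real, inner_smul_right, norm_smul, mul_pow, Real.norm_eq_abs,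
      sq_abs]
  have hstep : ‖p - τ • g - p‖ ^ 2 = τ ^ 2 * ‖g‖ ^ 2 := by
    rw [sub_sub_cancel_left, norm_neg, norm_smul, mul_pow, Real.norm_eq_abs, sq_abs]
  rw [halfspaceProj, hdist, hstep]
  linarith

lemma max_inner_sub_eq_norm_halfspaceProj_sub_mul {g : E} (hg : g ≠ 0) (c : ℝ) (p : E) :
    max 0 (⟪p, g⟫_ℝ - c) = ‖halfspaceProj g c p - p‖ * ‖g‖ := by
  have hg' : ‖g‖ ≠ 0 := norm_ne_zero_iff.2 hg
  rw [halfspaceProj, sub_sub_cancel_left, norm_neg, norm_smul, Real.norm_of_nonneg (by positivity)]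
  field_simp

section HalfspaceProjSeq

variable {p g : ℕ → E} {c : ℕ → ℝ} {s : E}
  (hp : ∀ k, p (k + 1) = halfspaceProj (g k) (c k) (p k)) (hs : ∀ k, ⟪s, g k⟫_ℝ ≤ c k)

include hp hs

lemma antitone_norm_sub_of_halfspaceProj : Antitone fun k ↦ ‖p k - s‖ :=
  antitone_nat_of_succ_le fun k ↦ by
    have hfejer := norm_halfspaceProj_sub_sq_add_le (hs k) (p k)
    rw [← hp k] at hfejer
    exact le_of_sq_le_sq (by linarith [sq_nonneg ‖p (k + 1) - p k‖]) (norm_nonneg _)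

lemma exists_tendsto_norm_sub_of_halfspaceProj : ∃ d, Tendsto (fun k ↦ ‖p k - s‖) atTop (𝓝 d) :=
  ⟨_, tendsto_atTop_ciInf (antitone_norm_sub_of_halfspaceProj hp hs)
    ⟨0, Set.forall_mem_range.2 fun _ ↦ norm_nonneg _⟩⟩

lemma isBigO_one_of_halfspaceProj : p =O[atTop] (1 : ℕ → ℝ) := by
  have hsub : (fun k ↦ p k - s) =O[atTop] (1 : ℕ → ℝ) := isBigO_one_nat_atTop_iff.2
    ⟨‖p 0 - s‖, fun k ↦ antitone_norm_sub_of_halfspaceProj hp hs (Nat.zero_le k)⟩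
  simpa using hsub.add (isBigO_const_const s one_ne_zero atTop)

lemma tendsto_succ_sub_of_halfspaceProj :
    Tendsto (fun k ↦ p (k + 1) - p k) atTop (𝓝 0) := by
  obtain ⟨d, hd⟩ := exists_tendsto_norm_sub_of_halfspaceProj hp hs
  refine tendsto_zero_of_mul_norm_sq_le one_pos (e := fun k ↦ ‖p k - s‖ ^ 2 - ‖p (k + 1) - s‖ ^ 2)
    (fun k ↦ ?_) (by simpa using (hd.pow 2).sub (((tendsto_add_atTop_iff_nat 1).2 hd).pow 2))
  rw [hp k]
  linarith [norm_halfspaceProj_sub_sq_add_le (hs k) (p k)]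

lemma tendsto_max_inner_sub_of_halfspaceProj (hg : ∀ k, g k ≠ 0)
    (hgb : g =O[atTop] (1 : ℕ → ℝ)) :
    Tendsto (fun k ↦ max 0 (⟪p k, g k⟫_ℝ - c k)) atTop (𝓝 0) := by
  have hstep : (fun k ↦ p (k + 1) - p k) =o[atTop] (1 : ℕ → ℝ) :=
    (isLittleO_one_iff ℝ).2 (tendsto_succ_sub_of_halfspaceProj hp hs)
  refine (isLittleO_one_iff ℝ).1 ?_
  simpa [max_inner_sub_eq_norm_halfspaceProj_sub_mul (hg _), ← hp]
    using hstep.norm_left.mul_isBigO hgb.norm_left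

end HalfspaceProjSeq

end Fejer

section MonotoneOperators

variable {κ E : Type*} [NormedAddCommGroup E] [InnerProductSpace ℝ E]

/-- Maximal monotonicity of a set-valued operator on a real inner product space. Maximality is
stated pointwise: a pair monotonically related to the whole graph belongs to the graph. -/
structure IsMaximalMonotone (A : E → Set E) : Prop where
  monotone : ∀ x y a b, a ∈ A x → b ∈ A y → 0 ≤ ⟪a - b, x - y⟫_ℝ
  maximal : ∀ x u, (∀ y v, v ∈ A y → 0 ≤ ⟪u - v, x - y⟫_ℝ) → u ∈ A x

lemma isMaximalMonotone_singleton_of_continuous {B : E → E}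
    (hmono : ∀ x y, 0 ≤ ⟪B x - B y, x - y⟫_ℝ) (hcont : Continuous B) :
    IsMaximalMonotone fun x ↦ {B x} where
  monotone := by
    rintro x y _ _ rfl rfl
    exact hmono x y
  maximal x u h := by
    have hray : ∀ t > (0 : ℝ), ⟪u - B (x + t • (u - B x)), u - B x⟫_ℝ ≤ 0 := fun t ht ↦ by
      have hxt := h (x + t • (u - B x)) _ rfl
      rw [sub_add_cancel_left, inner_neg_right, inner_smul_right] at hxt
      exact nonpos_of_mul_nonpos_right (neg_nonneg.1 hxt) ht
    have hlim : Tendsto (fun t : ℝ ↦ ⟪u - B (x + t • (u - B x)), u - B x⟫_ℝ) (𝓝[>] 0)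
        (𝓝 ⟪u - B x, u - B x⟫_ℝ) := by
      have hc : Continuous fun t : ℝ ↦ ⟪u - B (x + t • (u - B x)), u - B x⟫_ℝ := by fun_prop
      simpa using (hc.tendsto 0).mono_left nhdsWithin_le_nhds
    have hle := le_of_tendsto hlim (eventually_nhdsWithin_of_forall hray)
    exact sub_eq_zero.1 (real_inner_self_nonpos.1 hle)

namespace IsMaximalMonotone

variable {A : E → Set E} {l : Filter κ} [NeBot l] {x a : κ → E} {X P : E} {ℓ : ℝ}

lemma nonneg_add_inner_of_weakTendsto (hA : IsMaximalMonotone A) (ha : ∀ k, a k ∈ A (x k))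
    (hx : WeakTendsto x l X) (hP : WeakTendsto a l P)
    (hℓ : Tendsto (fun k ↦ ⟪a k - P, x k - X⟫_ℝ) l (𝓝 ℓ)) {Y V : E} (hV : V ∈ A Y) :
    0 ≤ ℓ + ⟪P - V, X - Y⟫_ℝ := by
  have hlim := ((hℓ.add (hP.tendsto_inner_sub_left (X - Y))).add
    (hx.tendsto_inner_sub_left (P - V))).add_const ⟪P - V, X - Y⟫_ℝ
  rw [add_zero, add_zero] at hlim
  refine ge_of_tendsto' hlim fun k ↦ (hA.monotone _ _ _ _ (ha k) hV).trans_eq ?_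
  rw [real_inner_comm (P - V), ← inner_add_right, add_assoc, ← inner_add_right,
    sub_add_sub_cancel, ← inner_add_left, sub_add_sub_cancel]

lemma mem_of_weakTendsto (hA : IsMaximalMonotone A) (ha : ∀ k, a k ∈ A (x k))
    (hx : WeakTendsto x l X) (hP : WeakTendsto a l P)
    (hℓ : Tendsto (fun k ↦ ⟪a k - P, x k - X⟫_ℝ) l (𝓝 ℓ)) (hnonpos : ℓ ≤ 0) : P ∈ A X :=
  hA.maximal X P fun _ _ hV ↦ by
    linarith [hA.nonneg_add_inner_of_weakTendsto ha hx hP hℓ hV]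

lemma nonneg_of_weakTendsto (hA : IsMaximalMonotone A) (ha : ∀ k, a k ∈ A (x k))
    (hx : WeakTendsto x l X) (hP : WeakTendsto a l P)
    (hℓ : Tendsto (fun k ↦ ⟪a k - P, x k - X⟫_ℝ) l (𝓝 ℓ)) : 0 ≤ ℓ := by
  by_contra! hneg
  have hP' := hA.mem_of_weakTendsto ha hx hP hℓ hneg.le
  have hself := hA.nonneg_add_inner_of_weakTendsto ha hx hP hℓ hP'
  rw [sub_self, inner_zero_left, add_zero] at hself
  exact hneg.not_ge hself

end IsMaximalMonotone

lemma norm_sub_le_norm_add_smul_sub {A : E → Set E} (hA : IsMaximalMonotone A) {ρ : ℝ}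
    (hρ : 0 ≤ ρ) {x s a b : E} (ha : a ∈ A x) (hb : b ∈ A s) :
    ‖x - s‖ ≤ ‖(x + ρ • a) - (s + ρ • b)‖ := by
  have hsplit : (x + ρ • a) - (s + ρ • b) = (x - s) + ρ • (a - b) := by module
  have hmono := hA.monotone _ _ _ _ ha hb
  rw [real_inner_comm] at hmono
  refine le_of_sq_le_sq ?_ (norm_nonneg _)
  rw [hsplit, norm_add_sq_real, inner_smul_right]
  nlinarith [mul_nonneg hρ hmono, sq_nonneg ‖ρ • (a - b)‖]

lemma norm_smul_sub_smul_le {e d : E} {c ρ : ℝ} (hc : 0 ≤ c) (hρ : 0 ≤ ρ)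
    (h : ρ * ‖d‖ ^ 2 ≤ 2 * c * ⟪d, e⟫_ℝ) : ‖c • e - ρ • d‖ ≤ c * ‖e‖ := by
  refine le_of_sq_le_sq ?_ (by positivity)
  rw [norm_sub_sq_real, norm_smul, norm_smul, Real.norm_of_nonneg hc, Real.norm_of_nonneg hρ,
    real_inner_smul_left, real_inner_smul_right, real_inner_comm]
  nlinarith [mul_le_mul_of_nonneg_left h hρ]

end MonotoneOperators

section ForwardBackward

variable {E : Type*} [NormedAddCommGroup E] [InnerProductSpace ℝ E]

/-- The data attached to one summand `A + B` of the inclusion: the operators, the relaxation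
parameter `α` and the stepsize `ρ`. The inequality `rho_mul_norm_sq_le` covers at once the two
admissible kinds of `B`: `L⁻¹`-cocoercive with `ρ ≤ 2 (1 - α) / L`, and constant. -/
structure ForwardBackwardBlock (E : Type*) [NormedAddCommGroup E] [InnerProductSpace ℝ E] where
  A : E → Set E
  B : E → E
  α : ℝ
  ρ : ℝ
  isMaximalMonotone : IsMaximalMonotone A
  alpha_pos : 0 < α
  alpha_le_one : α ≤ 1
  rho_pos : 0 < ρ
  rho_mul_norm_sq_le : ∀ x y, ρ * ‖B x - B y‖ ^ 2 ≤ 2 * (1 - α) * ⟪B x - B y, x - y⟫_ℝ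

lemma rho_mul_norm_sq_le_of_cocoercive_or_const {B : E → E} {α ρ : ℝ} (hα : α ≤ 1)
    (hB : (∃ L : ℝ, 0 < L ∧ (∀ x y, (1 / L) * ‖B x - B y‖ ^ 2 ≤ ⟪B x - B y, x - y⟫_ℝ) ∧
      ρ ≤ 2 * (1 - α) / L) ∨ ∃ v, ∀ x, B x = v) (x y : E) :
    ρ * ‖B x - B y‖ ^ 2 ≤ 2 * (1 - α) * ⟪B x - B y, x - y⟫_ℝ := by
  obtain ⟨L, -, hcoc, hρ⟩ | ⟨v, hv⟩ := hB
  · calc ρ * ‖B x - B y‖ ^ 2 ≤ 2 * (1 - α) / L * ‖B x - B y‖ ^ 2 := by gcongr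
      _ = 2 * (1 - α) * (1 / L * ‖B x - B y‖ ^ 2) := by ring
      _ ≤ 2 * (1 - α) * ⟪B x - B y, x - y⟫_ℝ :=
        mul_le_mul_of_nonneg_left (hcoc x y) (by linarith)
  · simp [hv]

namespace ForwardBackwardBlock

variable (b : ForwardBackwardBlock E)

lemma alpha_div_rho_pos : 0 < b.α / b.ρ := div_pos b.alpha_pos b.rho_pos

lemma div_mul_norm_sq_nonneg (e : E) : 0 ≤ b.α / b.ρ * ‖e‖ ^ 2 :=
  mul_nonneg b.alpha_div_rho_pos.le (sq_nonneg _)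

/-- The set-valued operator `A + B` of the block. -/
def T (x : E) : Set E := {y | ∃ a ∈ b.A x, y = a + b.B x}

lemma inner_B_sub_nonneg (x y : E) : 0 ≤ ⟪b.B x - b.B y, x - y⟫_ℝ := by
  by_contra! hneg
  have hzero : b.B x - b.B y = 0 := by
    have hle : b.ρ * ‖b.B x - b.B y‖ ^ 2 ≤ 0 := (b.rho_mul_norm_sq_le x y).trans
      (mul_nonpos_of_nonneg_of_nonpos (by linarith [b.alpha_le_one]) hneg.le)
    exact norm_eq_zero.1 (pow_eq_zero_iff two_ne_zero |>.1
      ((nonpos_of_mul_nonpos_right hle b.rho_pos).antisymm (sq_nonneg _)))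
  simp [hzero] at hneg

lemma lipschitzWith_B : LipschitzWith (2 / b.ρ).toNNReal b.B :=
  LipschitzWith.of_dist_le' fun x y ↦ by
    have hρ := b.rho_pos
    have hcoc : b.ρ * ‖b.B x - b.B y‖ ^ 2 ≤ 2 * (‖b.B x - b.B y‖ * ‖x - y‖) := by
      have hα := mul_nonneg b.alpha_pos.le (b.inner_B_sub_nonneg x y)
      linarith [b.rho_mul_norm_sq_le x y, real_inner_le_norm (b.B x - b.B y) (x - y)]
    rw [dist_eq_norm, dist_eq_norm, div_mul_eq_mul_div, le_div_iff₀ hρ]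
    rcases (norm_nonneg (b.B x - b.B y)).eq_or_lt with h0 | hpos
    · rw [← h0, zero_mul]
      positivity
    · exact le_of_mul_le_mul_left (by linarith) hpos

lemma isMaximalMonotone_B : IsMaximalMonotone fun x ↦ {b.B x} :=
  isMaximalMonotone_singleton_of_continuous b.inner_B_sub_nonneg b.lipschitzWith_B.continuous

variable {b}

lemma inner_sub_nonneg_of_mem_T {x s y y' : E} (hy : y ∈ b.T x) (hy' : y' ∈ b.T s) :
    0 ≤ ⟪x - s, y - y'⟫_ℝ := by
  obtain ⟨a, ha, rfl⟩ := hy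
  obtain ⟨a', ha', rfl⟩ := hy'
  rw [add_sub_add_comm, real_inner_comm, inner_add_left]
  exact add_nonneg (b.isMaximalMonotone.monotone _ _ _ _ ha ha') (b.inner_B_sub_nonneg x s)

/- `y - B x` and `B x` have weak limits whose defects `⟪y - B x - (W - β), x - X⟫` and
`⟪B x - β, x - X⟫` add up to the defect of `A + B`; both are nonnegative. -/
lemma exists_tendsto_inner_sub_of_mem_T [CompleteSpace E] {κ : Type*} {U : Ultrafilter κ}
    {x y : κ → E} {X W : E} (hmem : ∀ k, y k ∈ b.T (x k)) (hx : x =O[U] (1 : κ → ℝ))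
    (hy : y =O[U] (1 : κ → ℝ)) (hX : WeakTendsto x U X) (hW : WeakTendsto y U W) :
    ∃ ℓ, 0 ≤ ℓ ∧ Tendsto (fun k ↦ ⟪x k - X, y k - W⟫_ℝ) U (𝓝 ℓ) ∧ (ℓ = 0 → W ∈ b.T X) := by
  have hconst (p : E) : (fun _ ↦ p) =O[U] (1 : κ → ℝ) := isBigO_const_const p one_ne_zero _
  have hBx : (fun k ↦ b.B (x k)) =O[U] (1 : κ → ℝ) := by
    have hlip : (fun k ↦ b.B (x k) - b.B 0) =O[U] x := .of_bound (2 / b.ρ).toNNReal <|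
      .of_forall fun k ↦ by simpa using b.lipschitzWith_B.norm_sub_le (x k) 0
    simpa using (hlip.trans hx).add (hconst (b.B 0))
  obtain ⟨β, hβ⟩ := exists_weakTendsto_of_isBigO_one hBx
  have hxX := hx.sub (hconst X)
  obtain ⟨ℓA, hℓA⟩ := exists_tendsto_of_isBigO_one
    (isBigO_one_inner ((hy.sub hBx).sub (hconst (W - β))) hxX)
  obtain ⟨ℓB, hℓB⟩ := exists_tendsto_of_isBigO_one (isBigO_one_inner (hBx.sub (hconst β)) hxX)
  have hA := b.isMaximalMonotone
  have hB := b.isMaximalMonotone_B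
  have ha (k : κ) : y k - b.B (x k) ∈ b.A (x k) := by
    obtain ⟨a, ha, hya⟩ := hmem k
    rwa [hya, add_sub_cancel_right]
  have hℓA0 := hA.nonneg_of_weakTendsto ha hX (hW.sub hβ) hℓA
  have hℓB0 := hB.nonneg_of_weakTendsto (fun _ ↦ rfl) hX hβ hℓB
  refine ⟨ℓA + ℓB, add_nonneg hℓA0 hℓB0, (hℓA.add hℓB).congr fun k ↦ ?_, fun h0 ↦ ?_⟩
  · rw [← inner_add_left, real_inner_comm]
    congr 1
    abel
  · have hβX : β = b.B X :=
      hB.mem_of_weakTendsto (fun _ ↦ rfl) hX hβ hℓB (by linarith)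
    exact ⟨W - β, hA.mem_of_weakTendsto ha hX (hW.sub hβ) hℓA (by linarith), by simp [hβX]⟩

/-- The sequences `x`, `y` are produced by the one-forward-step update with inputs `t` (standing
for `G z`) and `w`: step `k` takes `x k` to `x (k + 1)` and returns the pair
`(x (k + 1), y k)` of the graph of `A + B`. -/
def IsRun (b : ForwardBackwardBlock E) (t w x y : ℕ → E) : Prop :=
  ∀ k, ∃ a ∈ b.A (x (k + 1)),
    x (k + 1) + b.ρ • a = (1 - b.α) • x k + b.α • t k - b.ρ • (b.B (x k) - w k) ∧
      y k = a + b.B (x (k + 1))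

/-- The combination of the primal gap `x - t` and the dual gap `y - w` that one update makes
proportional to the change in `x`. -/
def residual (b : ForwardBackwardBlock E) (t w x y : E) : E := b.α • (x - t) + b.ρ • (y - w)

lemma sub_eq_smul_residual_sub (t w x y : E) :
    y - w = b.ρ⁻¹ • (b.residual t w x y - b.α • (x - t)) := by
  rw [residual, add_sub_cancel_left, inv_smul_smul₀ b.rho_pos.ne']

lemma div_mul_norm_sq_sub_inner_eq (t w x y : E) :
    b.α / b.ρ * ‖x - t‖ ^ 2 - ⟪t - x, y - w⟫_ℝ =
      b.ρ⁻¹ * ⟪x - t, b.residual t w x y⟫_ℝ := by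
  have hρ := b.rho_pos.ne'
  rw [residual, inner_add_right, inner_smul_right, inner_smul_right, real_inner_self_eq_norm_sq,
    ← neg_sub x t, inner_neg_left]
  field_simp
  ring

namespace IsRun

variable {t w x y : ℕ → E} (h : b.IsRun t w x y)

include h

lemma mem_T (k : ℕ) : y k ∈ b.T (x (k + 1)) := by
  obtain ⟨a, ha, -, hy⟩ := h k
  exact ⟨a, ha, hy⟩

lemma residual_eq (k : ℕ) : b.residual (t k) (w k) (x (k + 1)) (y k) =
    (1 - b.α) • (x k - x (k + 1)) - b.ρ • (b.B (x k) - b.B (x (k + 1))) := by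
  obtain ⟨a, -, hx, hy⟩ := h k
  rw [← sub_eq_zero] at hx ⊢
  rw [← hx, residual, hy]
  module

lemma norm_residual_le (k : ℕ) : ‖b.residual (t k) (w k) (x (k + 1)) (y k)‖ ≤
    (1 - b.α) * ‖x (k + 1) - x k‖ := by
  rw [h.residual_eq, norm_sub_rev (x (k + 1))]
  exact norm_smul_sub_smul_le (sub_nonneg.2 b.alpha_le_one) b.rho_pos.le
    (b.rho_mul_norm_sq_le _ _)

lemma norm_succ_sub_le {s q : E} (hq : q ∈ b.T s) (k : ℕ) :
    ‖x (k + 1) - s‖ ≤ (1 - b.α) * ‖x k - s‖ + ‖b.residual (t k) (w k) s q‖ := by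
  obtain ⟨a, ha, hx, -⟩ := h k
  obtain ⟨a', ha', rfl⟩ := hq
  have hforward : ‖(1 - b.α) • (x k - s) - b.ρ • (b.B (x k) - b.B s)‖ ≤
      (1 - b.α) * ‖x k - s‖ :=
    norm_smul_sub_smul_le (sub_nonneg.2 b.alpha_le_one) b.rho_pos.le (b.rho_mul_norm_sq_le _ _)
  calc ‖x (k + 1) - s‖ ≤ ‖(x (k + 1) + b.ρ • a) - (s + b.ρ • a')‖ :=
        norm_sub_le_norm_add_smul_sub b.isMaximalMonotone b.rho_pos.le ha ha'
    _ = ‖(1 - b.α) • (x k - s) - b.ρ • (b.B (x k) - b.B s) -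
          b.residual (t k) (w k) s (a' + b.B s)‖ := by
        rw [hx, residual]
        congr 1
        module
    _ ≤ _ := (norm_sub_le _ _).trans (by gcongr)

lemma isBigO_one_x {s q : E} (hq : q ∈ b.T s) (ht : t =O[atTop] (1 : ℕ → ℝ))
    (hw : w =O[atTop] (1 : ℕ → ℝ)) : x =O[atTop] (1 : ℕ → ℝ) := by
  have hconst (p : E) : (fun _ ↦ p) =O[atTop] (1 : ℕ → ℝ) := isBigO_const_const p one_ne_zero _
  obtain ⟨K, hK⟩ := isBigO_one_nat_atTop_iff.1 <|
    (((hconst s).sub ht).const_smul_left b.α).add (((hconst q).sub hw).const_smul_left b.ρ)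
  obtain ⟨C, hC⟩ := exists_forall_le_of_le_mul_add (u := fun k ↦ ‖x k - s‖)
    (sub_nonneg.2 b.alpha_le_one) (sub_lt_self 1 b.alpha_pos)
    fun k ↦ (h.norm_succ_sub_le hq k).trans (add_le_add_right (hK k) _)
  have hsub : (fun k ↦ x k - s) =O[atTop] (1 : ℕ → ℝ) := isBigO_one_nat_atTop_iff.2 ⟨C, hC⟩
  simpa using hsub.add (hconst s)

lemma isBigO_one_y (ht : t =O[atTop] (1 : ℕ → ℝ)) (hw : w =O[atTop] (1 : ℕ → ℝ))
    (hx : x =O[atTop] (1 : ℕ → ℝ)) : y =O[atTop] (1 : ℕ → ℝ) := by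
  have hx' : (fun k ↦ x (k + 1)) =O[atTop] (1 : ℕ → ℝ) :=
    hx.comp_tendsto (tendsto_add_atTop_nat 1)
  have hres : (fun k ↦ b.residual (t k) (w k) (x (k + 1)) (y k)) =O[atTop] (1 : ℕ → ℝ) :=
    (IsBigO.of_norm_le h.norm_residual_le).trans ((hx'.sub hx).norm_left.const_mul_left _)
  simpa [← sub_eq_smul_residual_sub] using
    ((hres.sub ((hx'.sub ht).const_smul_left b.α)).const_smul_left b.ρ⁻¹).add hw

lemma norm_succ_sub_succ_le (k : ℕ) : ‖x (k + 2) - x (k + 1)‖ ≤ (1 - b.α) * ‖x (k + 1) - x k‖ +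
    ‖b.α • (t (k + 1) - t k) + b.ρ • (w (k + 1) - w k)‖ := by
  have hstep := h.norm_succ_sub_le (h.mem_T k) (k + 1)
  have hshift : b.residual (t (k + 1)) (w (k + 1)) (x (k + 1)) (y k) =
      b.residual (t k) (w k) (x (k + 1)) (y k) -
        (b.α • (t (k + 1) - t k) + b.ρ • (w (k + 1) - w k)) := by
    simp only [residual]
    module
  rw [sub_self, norm_zero, mul_zero, zero_add, hshift] at hstep
  exact hstep.trans ((norm_sub_le _ _).trans (by gcongr; exact h.norm_residual_le k))

lemma tendsto_residual (ht : Tendsto (fun k ↦ t (k + 1) - t k) atTop (𝓝 0))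
    (hw : Tendsto (fun k ↦ w (k + 1) - w k) atTop (𝓝 0)) :
    Tendsto (fun k ↦ b.residual (t k) (w k) (x (k + 1)) (y k)) atTop (𝓝 0) := by
  have hinput : Tendsto (fun k ↦ ‖b.α • (t (k + 1) - t k) + b.ρ • (w (k + 1) - w k)‖) atTop
      (𝓝 0) := by
    simpa using ((ht.const_smul b.α).add (hw.const_smul b.ρ)).norm
  have hsucc : Tendsto (fun k ↦ ‖x (k + 1) - x k‖) atTop (𝓝 0) :=
    tendsto_zero_of_le_mul_add (sub_nonneg.2 b.alpha_le_one) (sub_lt_self 1 b.alpha_pos)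
      (fun _ ↦ norm_nonneg _) h.norm_succ_sub_succ_le hinput
  exact squeeze_zero_norm h.norm_residual_le (by simpa using hsucc.const_mul (1 - b.α))

lemma tendsto_div_mul_norm_sq_sub_inner (htb : t =O[atTop] (1 : ℕ → ℝ))
    (hxb : x =O[atTop] (1 : ℕ → ℝ)) (ht : Tendsto (fun k ↦ t (k + 1) - t k) atTop (𝓝 0))
    (hw : Tendsto (fun k ↦ w (k + 1) - w k) atTop (𝓝 0)) :
    Tendsto (fun k ↦ b.α / b.ρ * ‖x (k + 1) - t k‖ ^ 2 - ⟪t k - x (k + 1), y k - w k⟫_ℝ) atTop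
      (𝓝 0) := by
  have hgap : (fun k ↦ x (k + 1) - t k) =O[atTop] (1 : ℕ → ℝ) :=
    (hxb.comp_tendsto (tendsto_add_atTop_nat 1)).sub htb
  simpa [div_mul_norm_sq_sub_inner_eq] using
    (tendsto_inner_zero hgap (h.tendsto_residual ht hw)).const_mul b.ρ⁻¹

lemma tendsto_y_sub (ht : Tendsto (fun k ↦ t (k + 1) - t k) atTop (𝓝 0))
    (hw : Tendsto (fun k ↦ w (k + 1) - w k) atTop (𝓝 0))
    (hx : Tendsto (fun k ↦ x (k + 1) - t k) atTop (𝓝 0)) :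
    Tendsto (fun k ↦ y k - w k) atTop (𝓝 0) := by
  simpa [← sub_eq_smul_residual_sub] using
    ((h.tendsto_residual ht hw).sub (hx.const_smul b.α)).const_smul b.ρ⁻¹

end IsRun

end ForwardBackwardBlock

end ForwardBackward

section WeightedPair

variable {ι H0 : Type*} {H : ι → Type*} [NormedAddCommGroup H0] [InnerProductSpace ℝ H0]

/-- The pair `(z, w)` as a point of the Hilbert sum, with the primal component scaled by `r`. For
`r = √γ` its squared norm is `γ ‖z‖ ^ 2 + ∑ i, ‖w i‖ ^ 2`, the metric in which the algorithm
projects. -/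
def weightedPair (r : ℝ) (z : H0) (w : ∀ i, H i) : WithLp 2 (H0 × PiLp 2 H) :=
  WithLp.toLp 2 (r • z, WithLp.toLp 2 w)

lemma weightedPair_surjective {r : ℝ} (hr : r ≠ 0) :
    Function.Surjective fun q : H0 × ∀ i, H i ↦ weightedPair r q.1 q.2 := fun p ↦
  ⟨(r⁻¹ • p.fst, p.snd.ofLp), by simp only [weightedPair, smul_inv_smul₀ hr]; rfl⟩

variable [∀ i, NormedAddCommGroup (H i)]

lemma norm_weightedPair_sq [Fintype ι] (r : ℝ) (z : H0) (w : ∀ i, H i) :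
    ‖weightedPair r z w‖ ^ 2 = r ^ 2 * ‖z‖ ^ 2 + ∑ i, ‖w i‖ ^ 2 := by
  simp [weightedPair, WithLp.prod_norm_sq_eq_of_L2, PiLp.norm_sq_eq_of_L2, norm_smul, mul_pow]

lemma isBigO_one_weightedPair [Fintype ι] {κ : Type*} {l : Filter κ} {z : κ → H0}
    {w : κ → ∀ i, H i} (r : ℝ) (hz : z =O[l] (1 : κ → ℝ))
    (hw : ∀ i, (fun k ↦ w k i) =O[l] (1 : κ → ℝ)) :
    (fun k ↦ weightedPair r (z k) (w k)) =O[l] (1 : κ → ℝ) := by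
  have hsq : (fun k ↦ ‖weightedPair r (z k) (w k)‖ ^ 2) =O[l] ((1 : κ → ℝ) ^ 2) := by
    simp only [norm_weightedPair_sq]
    exact ((hz.norm_left.pow 2).const_mul_left _).add (.fun_sum fun i _ ↦ (hw i).norm_left.pow 2)
  exact (IsBigO.of_pow two_ne_zero hsq).of_norm_left

variable [∀ i, InnerProductSpace ℝ (H i)]

/-- The primal component of a point written as `weightedPair r z w`, for `r ≠ 0`. -/
noncomputable def primalPart (r : ℝ) : WithLp 2 (H0 × PiLp 2 H) →L[ℝ] H0 :=
  r⁻¹ • WithLp.fstL 2 ℝ H0 (PiLp 2 H)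

/-- The `i`-th dual component of a point written as `weightedPair r z w`. -/
noncomputable def dualPart (i : ι) : WithLp 2 (H0 × PiLp 2 H) →L[ℝ] H i :=
  PiLp.proj 2 H i ∘L WithLp.sndL 2 ℝ H0 (PiLp 2 H)

lemma primalPart_weightedPair {r : ℝ} (hr : r ≠ 0) (z : H0) (w : ∀ i, H i) :
    primalPart r (weightedPair r z w) = z :=
  inv_smul_smul₀ hr z

lemma dualPart_weightedPair (r : ℝ) (z : H0) (w : ∀ i, H i) (i : ι) :
    dualPart i (weightedPair r z w) = w i :=
  rfl

lemma weightedPair_sub_smul {r : ℝ} (hr : r ≠ 0) (c : ℝ) (z v : H0) (w u : ∀ i, H i) :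
    weightedPair r z w - c • weightedPair r⁻¹ v u =
      weightedPair r (z - ((r ^ 2)⁻¹ * c) • v) fun i ↦ w i - c • u i := by
  have hscale : r * ((r ^ 2)⁻¹ * c) = c * r⁻¹ := by field_simp
  have hprimal : r • z - c • r⁻¹ • v = r • (z - ((r ^ 2)⁻¹ * c) • v) := by
    rw [smul_sub, smul_smul, smul_smul, hscale]
  simp only [weightedPair, ← hprimal]
  rfl

lemma inner_weightedPair [Fintype ι] {r : ℝ} (hr : r ≠ 0) (z v : H0) (w u : ∀ i, H i) :
    ⟪weightedPair r z w, weightedPair r⁻¹ v u⟫_ℝ = ⟪z, v⟫_ℝ + ∑ i, ⟪w i, u i⟫_ℝ := by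
  simp [weightedPair, WithLp.prod_inner_apply, PiLp.inner_apply, real_inner_smul_left,
    real_inner_smul_right, hr]

end WeightedPair

section Algorithm

variable {ι H0 : Type*} {H : ι → Type*} [NormedAddCommGroup H0] [InnerProductSpace ℝ H0]
  [∀ i, NormedAddCommGroup (H i)] [∀ i, InnerProductSpace ℝ (H i)]

/-- The sequences generated by projective splitting. Step `k` starts from `z k`, `w k`, `x k`,
`xn k` and produces `x (k + 1)`, `xn (k + 1)`, `y k`, `yn k`, so `x k` and `xn k` are `x_i^k` and
`x_n^k`, while `z k`, `w k`, `y k`, `yn k` are `z^{k+1}`, `w_i^{k+1}`, `y_i^{k+1}`, `y_n^{k+1}`. -/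
structure Iterates {ι : Type*} (H0 : Type*) (H : ι → Type*) where
  z : ℕ → H0
  w : ℕ → ∀ i, H i
  x : ℕ → ∀ i, H i
  xn : ℕ → H0
  y : ℕ → ∀ i, H i
  yn : ℕ → H0

/-- The dual gradient component `u_i = x_i - G_i x_n` of the separating function. -/
def Iterates.gap (s : Iterates H0 H) (G : ∀ i, H0 →L[ℝ] H i) (k : ℕ) (i : ι) : H i :=
  s.x (k + 1) i - G i (s.xn (k + 1))

variable [Fintype ι] [CompleteSpace H0] [∀ i, CompleteSpace (H i)]

/-- `∑ i, G_i^* w_i`, so that `w_n = -adjointSum G w`. -/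
noncomputable def adjointSum (G : ∀ i, H0 →L[ℝ] H i) (w : ∀ i, H i) : H0 :=
  ∑ i, (G i).adjoint (w i)

lemma inner_adjointSum (G : ∀ i, H0 →L[ℝ] H i) (z : H0) (w : ∀ i, H i) :
    ⟪z, adjointSum G w⟫_ℝ = ∑ i, ⟪G i z, w i⟫_ℝ := by
  simp only [adjointSum, inner_sum, ContinuousLinearMap.adjoint_inner_right]

lemma adjointSum_sub (G : ∀ i, H0 →L[ℝ] H i) (w w' : ∀ i, H i) :
    adjointSum G (w - w') = adjointSum G w - adjointSum G w' := by
  simp only [adjointSum, Pi.sub_apply, map_sub, Finset.sum_sub_distrib]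

lemma isBigO_one_adjointSum {κ : Type*} {l : Filter κ} (G : ∀ i, H0 →L[ℝ] H i)
    {w : κ → ∀ i, H i} (hw : ∀ i, (fun k ↦ w k i) =O[l] (1 : κ → ℝ)) :
    (fun k ↦ adjointSum G (w k)) =O[l] (1 : κ → ℝ) :=
  .fun_sum fun i _ ↦ ((G i).adjoint.isBigO_comp (fun k ↦ w k i) l).trans (hw i)

lemma tendsto_adjointSum_zero {κ : Type*} {l : Filter κ} (G : ∀ i, H0 →L[ℝ] H i)
    {w : κ → ∀ i, H i} (hw : ∀ i, Tendsto (fun k ↦ w k i) l (𝓝 0)) :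
    Tendsto (fun k ↦ adjointSum G (w k)) l (𝓝 0) := by
  simpa [adjointSum] using tendsto_finsetSum Finset.univ
    fun i _ ↦ ((G i).adjoint.continuous.tendsto 0).comp (by simpa using hw i)

/-- The extended solution set of `0 ∈ ∑ i, G_i^* T_i (G_i z) + T_n z`: a solution `z` together with
dual certificates `w_i ∈ T_i (G_i z)`. -/
def extendedSolutionSet (G : ∀ i, H0 →L[ℝ] H i) (b : ∀ i, ForwardBackwardBlock (H i))
    (bn : ForwardBackwardBlock H0) : Set (H0 × ∀ i, H i) :=
  {q | (∀ i, q.2 i ∈ (b i).T (G i q.1)) ∧ -adjointSum G q.2 ∈ bn.T q.1}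

namespace Iterates

variable (s : Iterates H0 H) (G : ∀ i, H0 →L[ℝ] H i) (γ : ℝ) (k : ℕ)

/-- The primal gradient component `v = ∑ i, G_i^* y_i + y_n` of the separating function. -/
noncomputable def dualResidual : H0 := adjointSum G (s.y k) + s.yn k

/-- The separating function `φ_k`, nonpositive on the extended solution set. -/
noncomputable def separator (z : H0) (w : ∀ i, H i) : ℝ :=
  (∑ i, ⟪G i z - s.x (k + 1) i, s.y k i - w i⟫_ℝ) +
    ⟪z - s.xn (k + 1), s.yn k - -adjointSum G w⟫_ℝ

/-- The squared norm `π_k` of the gradient of `φ_k`. -/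
noncomputable def gradNormSq : ℝ := (∑ i, ‖s.gap G k i‖ ^ 2) + γ⁻¹ * ‖s.dualResidual G k‖ ^ 2

/-- The projection stepsize `τ_k`. -/
noncomputable def stepLength : ℝ := max 0 (s.separator G k (s.z k) (s.w k)) / s.gradNormSq G γ k

/-- The current primal-dual point in the `γ`-weighted Hilbert sum. -/
noncomputable def point : WithLp 2 (H0 × PiLp 2 H) := weightedPair √γ (s.z k) (s.w k)

/-- The gradient of `φ_k` in the `γ`-weighted Hilbert sum, see `separator_eq_inner_sub`. -/
noncomputable def gradient : WithLp 2 (H0 × PiLp 2 H) :=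
  weightedPair (√γ)⁻¹ (s.dualResidual G k) (s.gap G k)

/-- The level at which `gradient` cuts out the half-space `φ_k ≤ 0`. -/
noncomputable def cutoff : ℝ := ⟪weightedPair √γ (s.xn (k + 1)) (s.y k), s.gradient G γ k⟫_ℝ

/- Writing `G_i z - x_i = G_i (z - x_n) - u_i`, the terms bilinear in `(z, w)` cancel, so `φ_k` is
affine. -/
lemma separator_eq (z : H0) (w : ∀ i, H i) : s.separator G k z w =
    ⟪z - s.xn (k + 1), s.dualResidual G k⟫_ℝ + ∑ i, ⟪w i - s.y k i, s.gap G k i⟫_ℝ := by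
  have hterm (i : ι) : ⟪G i z - s.x (k + 1) i, s.y k i - w i⟫_ℝ =
      ⟪G i (z - s.xn (k + 1)), s.y k i⟫_ℝ - ⟪G i (z - s.xn (k + 1)), w i⟫_ℝ +
        ⟪w i - s.y k i, s.gap G k i⟫_ℝ := by
    rw [← inner_sub_right, real_inner_comm (s.gap G k i), ← neg_sub (s.y k i) (w i),
      inner_neg_right, ← sub_eq_add_neg, ← inner_sub_left, gap, map_sub]
    congr 1
    abel
  rw [separator, dualResidual, sub_neg_eq_add, inner_add_right, inner_add_right,
    inner_adjointSum, inner_adjointSum]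
  simp only [hterm, Finset.sum_add_distrib, Finset.sum_sub_distrib]
  ring

variable {γ}

lemma separator_eq_inner_sub (hγ : 0 < γ) (z : H0) (w : ∀ i, H i) :
    s.separator G k z w = ⟪weightedPair √γ z w, s.gradient G γ k⟫_ℝ - s.cutoff G γ k := by
  have hr : √γ ≠ 0 := (Real.sqrt_pos.2 hγ).ne'
  simp only [separator_eq, cutoff, gradient, inner_weightedPair hr, inner_sub_left,
    Finset.sum_sub_distrib]
  ring

lemma norm_gradient_sq (hγ : 0 ≤ γ) : ‖s.gradient G γ k‖ ^ 2 = s.gradNormSq G γ k := by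
  rw [gradient, norm_weightedPair_sq, inv_pow, Real.sq_sqrt hγ, gradNormSq, add_comm]

end Iterates

/-- The iterates `s` satisfy the recursions of one-forward-step projective splitting for the blocks
`b i`, `bn`, and the gradient of the separating function never vanishes. -/
structure IsProjectiveSplitting (G : ∀ i, H0 →L[ℝ] H i) (b : ∀ i, ForwardBackwardBlock (H i))
    (bn : ForwardBackwardBlock H0) (γ : ℝ) (s : Iterates H0 H) : Prop where
  gamma_pos : 0 < γ
  isRun : ∀ i, (b i).IsRun (fun k ↦ G i (s.z k)) (fun k ↦ s.w k i) (fun k ↦ s.x k i)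
    (fun k ↦ s.y k i)
  isRun_last : bn.IsRun s.z (fun k ↦ -adjointSum G (s.w k)) s.xn s.yn
  gradNormSq_pos : ∀ k, 0 < s.gradNormSq G γ k
  z_succ : ∀ k, s.z (k + 1) = s.z k - (γ⁻¹ * s.stepLength G γ k) • s.dualResidual G k
  w_succ : ∀ k i, s.w (k + 1) i = s.w k i - s.stepLength G γ k • s.gap G k i

end Algorithm

section Convergence

variable {ι H0 : Type*} {H : ι → Type*} [NormedAddCommGroup H0] [InnerProductSpace ℝ H0]
  [∀ i, NormedAddCommGroup (H i)] [∀ i, InnerProductSpace ℝ (H i)]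
  [Fintype ι] [CompleteSpace H0] [∀ i, CompleteSpace (H i)]
  {G : ∀ i, H0 →L[ℝ] H i} {b : ∀ i, ForwardBackwardBlock (H i)} {bn : ForwardBackwardBlock H0}
  {γ : ℝ} {s : Iterates H0 H}

namespace IsProjectiveSplitting

variable (h : IsProjectiveSplitting G b bn γ s)

include h

lemma sqrt_gamma_ne_zero : √γ ≠ 0 := (Real.sqrt_pos.2 h.gamma_pos).ne'

lemma gradient_ne_zero (k : ℕ) : s.gradient G γ k ≠ 0 := by
  rw [← norm_ne_zero_iff, ← pow_ne_zero_iff two_ne_zero, s.norm_gradient_sq G k h.gamma_pos.le]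
  exact (h.gradNormSq_pos k).ne'

lemma point_succ (k : ℕ) :
    s.point γ (k + 1) = halfspaceProj (s.gradient G γ k) (s.cutoff G γ k) (s.point γ k) := by
  have hstep : max 0 (⟪s.point γ k, s.gradient G γ k⟫_ℝ - s.cutoff G γ k) /
      ‖s.gradient G γ k‖ ^ 2 = s.stepLength G γ k := by
    rw [Iterates.point, ← s.separator_eq_inner_sub G k h.gamma_pos,
      s.norm_gradient_sq G k h.gamma_pos.le, Iterates.stepLength]
  rw [halfspaceProj, hstep, Iterates.point, Iterates.point, Iterates.gradient,
    weightedPair_sub_smul h.sqrt_gamma_ne_zero, Real.sq_sqrt h.gamma_pos.le, ← h.z_succ]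
  congr 1
  exact funext (h.w_succ k)

lemma separator_nonpos {q : H0 × ∀ i, H i} (hq : q ∈ extendedSolutionSet G b bn) (k : ℕ) :
    s.separator G k q.1 q.2 ≤ 0 := by
  refine add_nonpos (Finset.sum_nonpos fun i _ ↦ ?_) ?_
  · rw [← neg_sub, inner_neg_left, neg_nonpos]
    exact ForwardBackwardBlock.inner_sub_nonneg_of_mem_T ((h.isRun i).mem_T k) (hq.1 i)
  · rw [← neg_sub (s.xn (k + 1)), inner_neg_left, neg_nonpos]
    exact ForwardBackwardBlock.inner_sub_nonneg_of_mem_T (h.isRun_last.mem_T k) hq.2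

lemma inner_gradient_le_cutoff {q : H0 × ∀ i, H i} (hq : q ∈ extendedSolutionSet G b bn)
    (k : ℕ) : ⟪weightedPair √γ q.1 q.2, s.gradient G γ k⟫_ℝ ≤ s.cutoff G γ k := by
  rw [← sub_nonpos, ← s.separator_eq_inner_sub G k h.gamma_pos]
  exact h.separator_nonpos hq k

variable (hS : (extendedSolutionSet G b bn).Nonempty)

include hS

lemma isBigO_one_point : s.point γ =O[atTop] (1 : ℕ → ℝ) :=
  isBigO_one_of_halfspaceProj h.point_succ (h.inner_gradient_le_cutoff hS.some_mem)

lemma isBigO_one_z : s.z =O[atTop] (1 : ℕ → ℝ) := by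
  simpa only [Iterates.point, primalPart_weightedPair h.sqrt_gamma_ne_zero] using
    ((primalPart √γ).isBigO_comp (s.point γ) atTop).trans (h.isBigO_one_point hS)

lemma isBigO_one_w (i : ι) : (fun k ↦ s.w k i) =O[atTop] (1 : ℕ → ℝ) :=
  ((dualPart i).isBigO_comp (s.point γ) atTop).trans (h.isBigO_one_point hS)

lemma isBigO_one_G_z (i : ι) : (fun k ↦ G i (s.z k)) =O[atTop] (1 : ℕ → ℝ) :=
  ((G i).isBigO_comp s.z atTop).trans (h.isBigO_one_z hS)

lemma isBigO_one_w_last : (fun k ↦ -adjointSum G (s.w k)) =O[atTop] (1 : ℕ → ℝ) :=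
  (isBigO_one_adjointSum G (h.isBigO_one_w hS)).neg_left

lemma isBigO_one_x (i : ι) : (fun k ↦ s.x k i) =O[atTop] (1 : ℕ → ℝ) :=
  (h.isRun i).isBigO_one_x (hS.some_mem.1 i) (h.isBigO_one_G_z hS i) (h.isBigO_one_w hS i)

lemma isBigO_one_xn : s.xn =O[atTop] (1 : ℕ → ℝ) :=
  h.isRun_last.isBigO_one_x hS.some_mem.2 (h.isBigO_one_z hS) (h.isBigO_one_w_last hS)

lemma isBigO_one_x_succ (i : ι) : (fun k ↦ s.x (k + 1) i) =O[atTop] (1 : ℕ → ℝ) :=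
  (h.isBigO_one_x hS i).comp_tendsto (tendsto_add_atTop_nat 1)

lemma isBigO_one_xn_succ : (fun k ↦ s.xn (k + 1)) =O[atTop] (1 : ℕ → ℝ) :=
  (h.isBigO_one_xn hS).comp_tendsto (tendsto_add_atTop_nat 1)

lemma isBigO_one_y (i : ι) : (fun k ↦ s.y k i) =O[atTop] (1 : ℕ → ℝ) :=
  (h.isRun i).isBigO_one_y (h.isBigO_one_G_z hS i) (h.isBigO_one_w hS i) (h.isBigO_one_x hS i)

lemma isBigO_one_yn : s.yn =O[atTop] (1 : ℕ → ℝ) :=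
  h.isRun_last.isBigO_one_y (h.isBigO_one_z hS) (h.isBigO_one_w_last hS) (h.isBigO_one_xn hS)

lemma isBigO_one_gradient : s.gradient G γ =O[atTop] (1 : ℕ → ℝ) := by
  refine isBigO_one_weightedPair _
    ((isBigO_one_adjointSum G (h.isBigO_one_y hS)).add (h.isBigO_one_yn hS)) fun i ↦ ?_
  exact (h.isBigO_one_x_succ hS i).sub
    (((G i).isBigO_comp (fun k ↦ s.xn (k + 1)) atTop).trans (h.isBigO_one_xn_succ hS))

lemma tendsto_max_separator :
    Tendsto (fun k ↦ max 0 (s.separator G k (s.z k) (s.w k))) atTop (𝓝 0) := by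
  simpa only [s.separator_eq_inner_sub G _ h.gamma_pos, Iterates.point] using
    tendsto_max_inner_sub_of_halfspaceProj h.point_succ (h.inner_gradient_le_cutoff hS.some_mem)
      h.gradient_ne_zero (h.isBigO_one_gradient hS)

lemma tendsto_point_succ_sub :
    Tendsto (fun k ↦ s.point γ (k + 1) - s.point γ k) atTop (𝓝 0) :=
  tendsto_succ_sub_of_halfspaceProj h.point_succ (h.inner_gradient_le_cutoff hS.some_mem)

lemma tendsto_z_succ_sub : Tendsto (fun k ↦ s.z (k + 1) - s.z k) atTop (𝓝 0) := by
  simpa [Iterates.point, primalPart_weightedPair h.sqrt_gamma_ne_zero, Function.comp_def] using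
    ((primalPart √γ).continuous.tendsto 0).comp (h.tendsto_point_succ_sub hS)

lemma tendsto_w_succ_sub (i : ι) : Tendsto (fun k ↦ s.w (k + 1) i - s.w k i) atTop (𝓝 0) := by
  simpa [Iterates.point, dualPart_weightedPair, Function.comp_def] using
    ((dualPart i).continuous.tendsto 0).comp (h.tendsto_point_succ_sub hS)

lemma tendsto_G_z_succ_sub (i : ι) :
    Tendsto (fun k ↦ G i (s.z (k + 1)) - G i (s.z k)) atTop (𝓝 0) := by
  simpa [Function.comp_def] using ((G i).continuous.tendsto 0).comp (h.tendsto_z_succ_sub hS)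

lemma tendsto_w_last_succ_sub :
    Tendsto (fun k ↦ -adjointSum G (s.w (k + 1)) - -adjointSum G (s.w k)) atTop (𝓝 0) := by
  simpa [adjointSum_sub, ← sub_eq_neg_add] using
    (tendsto_adjointSum_zero G (w := fun k ↦ s.w (k + 1) - s.w k) (h.tendsto_w_succ_sub hS)).neg

lemma tendsto_sum_div_mul_norm_sq :
    Tendsto (fun k ↦ (∑ i, (b i).α / (b i).ρ * ‖s.x (k + 1) i - G i (s.z k)‖ ^ 2) +
      bn.α / bn.ρ * ‖s.xn (k + 1) - s.z k‖ ^ 2) atTop (𝓝 0) := by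
  have hblocks := tendsto_finsetSum Finset.univ fun i _ ↦
    (h.isRun i).tendsto_div_mul_norm_sq_sub_inner (h.isBigO_one_G_z hS i) (h.isBigO_one_x hS i)
      (h.tendsto_G_z_succ_sub hS i) (h.tendsto_w_succ_sub hS i)
  have hlast := h.isRun_last.tendsto_div_mul_norm_sq_sub_inner (h.isBigO_one_z hS)
    (h.isBigO_one_xn hS) (h.tendsto_z_succ_sub hS) (h.tendsto_w_last_succ_sub hS)
  have hlim := (hblocks.add hlast).add (h.tendsto_max_separator hS)
  simp only [Finset.sum_const_zero, add_zero] at hlim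
  refine squeeze_zero (fun k ↦ ?_) (fun k ↦ ?_) hlim
  · exact add_nonneg (Finset.sum_nonneg fun i _ ↦ (b i).div_mul_norm_sq_nonneg _)
      (bn.div_mul_norm_sq_nonneg _)
  · have hle := le_max_right 0 (s.separator G k (s.z k) (s.w k))
    rw [Iterates.separator] at hle ⊢
    rw [Finset.sum_sub_distrib]
    linarith

lemma tendsto_x_sub (i : ι) :
    Tendsto (fun k ↦ s.x (k + 1) i - G i (s.z k)) atTop (𝓝 0) := by
  refine tendsto_zero_of_mul_norm_sq_le (b i).alpha_div_rho_pos (fun k ↦ ?_)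
    (h.tendsto_sum_div_mul_norm_sq hS)
  refine le_add_of_le_of_nonneg ?_ (bn.div_mul_norm_sq_nonneg _)
  exact Finset.single_le_sum
    (f := fun j ↦ (b j).α / (b j).ρ * ‖s.x (k + 1) j - G j (s.z k)‖ ^ 2)
    (fun j _ ↦ (b j).div_mul_norm_sq_nonneg _) (Finset.mem_univ i)

lemma tendsto_xn_sub : Tendsto (fun k ↦ s.xn (k + 1) - s.z k) atTop (𝓝 0) :=
  tendsto_zero_of_mul_norm_sq_le bn.alpha_div_rho_pos
    (fun _ ↦ le_add_of_nonneg_left (Finset.sum_nonneg fun i _ ↦ (b i).div_mul_norm_sq_nonneg _))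
    (h.tendsto_sum_div_mul_norm_sq hS)

lemma tendsto_y_sub (i : ι) : Tendsto (fun k ↦ s.y k i - s.w k i) atTop (𝓝 0) :=
  (h.isRun i).tendsto_y_sub (h.tendsto_G_z_succ_sub hS i) (h.tendsto_w_succ_sub hS i)
    (h.tendsto_x_sub hS i)

lemma tendsto_yn_sub : Tendsto (fun k ↦ s.yn k - -adjointSum G (s.w k)) atTop (𝓝 0) :=
  h.isRun_last.tendsto_y_sub (h.tendsto_z_succ_sub hS) (h.tendsto_w_last_succ_sub hS)
    (h.tendsto_xn_sub hS)

lemma tendsto_gap (i : ι) : Tendsto (fun k ↦ s.gap G k i) atTop (𝓝 0) := by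
  simpa [Iterates.gap, Function.comp_def] using
    (h.tendsto_x_sub hS i).sub (((G i).continuous.tendsto 0).comp (h.tendsto_xn_sub hS))

lemma tendsto_dualResidual : Tendsto (s.dualResidual G) atTop (𝓝 0) := by
  have hsum := tendsto_adjointSum_zero G (w := fun k ↦ s.y k - s.w k) (h.tendsto_y_sub hS)
  refine (add_zero (0 : H0) ▸ hsum.add (h.tendsto_yn_sub hS)).congr fun k ↦ ?_
  rw [adjointSum_sub, Iterates.dualResidual]
  abel

lemma tendsto_separator (z : H0) (w : ∀ i, H i) :
    Tendsto (fun k ↦ s.separator G k z w) atTop (𝓝 0) := by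
  have hprimal : (fun k ↦ z - s.xn (k + 1)) =O[atTop] (1 : ℕ → ℝ) :=
    (isBigO_const_const z one_ne_zero _).sub (h.isBigO_one_xn_succ hS)
  have hdual (i : ι) : (fun k ↦ w i - s.y k i) =O[atTop] (1 : ℕ → ℝ) :=
    (isBigO_const_const (w i) one_ne_zero _).sub (h.isBigO_one_y hS i)
  simpa [s.separator_eq G] using
    (tendsto_inner_zero hprimal (h.tendsto_dualResidual hS)).add
      (tendsto_finsetSum Finset.univ fun i _ ↦ tendsto_inner_zero (hdual i) (h.tendsto_gap hS i))

section WeakLimits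

variable {l : Filter ℕ} (hl : l ≤ atTop) {Z : H0} {W : ∀ i, H i}

include hl

lemma weakTendsto_x (hZ : WeakTendsto s.z l Z) (i : ι) :
    WeakTendsto (fun k ↦ s.x (k + 1) i) l (G i Z) :=
  (hZ.map (G i)).congr_of_sub ((h.tendsto_x_sub hS i).mono_left hl)

lemma weakTendsto_xn (hZ : WeakTendsto s.z l Z) : WeakTendsto (fun k ↦ s.xn (k + 1)) l Z :=
  hZ.congr_of_sub ((h.tendsto_xn_sub hS).mono_left hl)

lemma weakTendsto_y (hW : ∀ i, WeakTendsto (fun k ↦ s.w k i) l (W i)) (i : ι) :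
    WeakTendsto (fun k ↦ s.y k i) l (W i) :=
  (hW i).congr_of_sub ((h.tendsto_y_sub hS i).mono_left hl)

lemma weakTendsto_yn (hW : ∀ i, WeakTendsto (fun k ↦ s.w k i) l (W i)) :
    WeakTendsto s.yn l (-adjointSum G W) :=
  (weakTendsto_neg_sum fun i ↦ (hW i).map (G i).adjoint).congr_of_sub
    ((h.tendsto_yn_sub hS).mono_left hl)

end WeakLimits

/- The limits `ℓ i` of the block defects are nonnegative and sum to `lim -φ_k(Z, W) = 0`, so each of
them vanishes. -/
lemma mem_extendedSolutionSet_of_weakTendsto {U : Ultrafilter ℕ} (hU : (U : Filter ℕ) ≤ atTop)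
    {Z : H0} {W : ∀ i, H i} (hZ : WeakTendsto s.z U Z)
    (hW : ∀ i, WeakTendsto (fun k ↦ s.w k i) U (W i)) :
    (Z, W) ∈ extendedSolutionSet G b bn := by
  choose ℓ hℓ0 hℓ hmem using fun i ↦ ForwardBackwardBlock.exists_tendsto_inner_sub_of_mem_T
    (h.isRun i).mem_T ((h.isBigO_one_x_succ hS i).mono hU) ((h.isBigO_one_y hS i).mono hU)
    (h.weakTendsto_x hS hU hZ i) (h.weakTendsto_y hS hU hW i)
  obtain ⟨ℓn, hℓn0, hℓn, hmemn⟩ := ForwardBackwardBlock.exists_tendsto_inner_sub_of_mem_T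
    h.isRun_last.mem_T ((h.isBigO_one_xn_succ hS).mono hU) ((h.isBigO_one_yn hS).mono hU)
    (h.weakTendsto_xn hS hU hZ) (h.weakTendsto_yn hS hU hW)
  have hsum : ∑ i, ℓ i + ℓn = 0 := by
    refine tendsto_nhds_unique ((tendsto_finsetSum Finset.univ fun i _ ↦ hℓ i).add hℓn) ?_
    refine (neg_zero (G := ℝ) ▸ ((h.tendsto_separator hS Z W).mono_left hU).neg).congr fun k ↦ ?_
    simp only [Iterates.separator, neg_add, ← Finset.sum_neg_distrib, ← inner_neg_left, neg_sub]
  have hsum0 : 0 ≤ ∑ i, ℓ i := Finset.sum_nonneg fun i _ ↦ hℓ0 i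
  have hblocks : ∑ i, ℓ i = 0 := by linarith
  exact ⟨fun i ↦ hmem i ((Finset.sum_eq_zero_iff_of_nonneg fun i _ ↦ hℓ0 i).1 hblocks i
    (Finset.mem_univ i)), hmemn (by linarith)⟩

lemma exists_weakTendsto_z_w : ∃ q ∈ extendedSolutionSet G b bn,
    WeakTendsto s.z atTop q.1 ∧ ∀ i, WeakTendsto (fun k ↦ s.w k i) atTop (q.2 i) := by
  have hr := h.sqrt_gamma_ne_zero
  have hcomponents {l : Filter ℕ} {q : H0 × ∀ i, H i}
      (hq : WeakTendsto (s.point γ) l (weightedPair √γ q.1 q.2)) :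
      WeakTendsto s.z l q.1 ∧ ∀ i, WeakTendsto (fun k ↦ s.w k i) l (q.2 i) :=
    ⟨by simpa only [Iterates.point, primalPart_weightedPair hr] using hq.map (primalPart √γ),
      fun i ↦ hq.map (dualPart i)⟩
  obtain ⟨_, ⟨q, hqS, rfl⟩, hq⟩ := exists_weakTendsto_of_tendsto_norm_sub (p := s.point γ)
    (S := (fun q ↦ weightedPair √γ q.1 q.2) '' extendedSolutionSet G b bn)
    (Set.forall_mem_image.2 fun q hq ↦
      exists_tendsto_norm_sub_of_halfspaceProj h.point_succ (h.inner_gradient_le_cutoff hq))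
    fun U hU ↦ by
      obtain ⟨p, hp⟩ := exists_weakTendsto_of_isBigO_one ((h.isBigO_one_point hS).mono hU)
      obtain ⟨q, rfl⟩ := weightedPair_surjective hr p
      obtain ⟨hZ, hW⟩ := hcomponents hp
      exact ⟨_, ⟨q, h.mem_extendedSolutionSet_of_weakTendsto hS hU hZ hW, rfl⟩, hp⟩
  exact ⟨q, hqS, hcomponents hq⟩

theorem exists_weakTendsto : ∃ q ∈ extendedSolutionSet G b bn,
    WeakTendsto s.z atTop q.1 ∧ (∀ i, WeakTendsto (fun k ↦ s.w k i) atTop (q.2 i)) ∧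
    (∀ i, WeakTendsto (fun k ↦ s.x k i) atTop (G i q.1)) ∧
    (∀ i, WeakTendsto (fun k ↦ s.y k i) atTop (q.2 i)) ∧
    WeakTendsto s.xn atTop q.1 ∧ WeakTendsto s.yn atTop (-adjointSum G q.2) := by
  obtain ⟨q, hq, hz, hw⟩ := h.exists_weakTendsto_z_w hS
  exact ⟨q, hq, hz, hw, fun i ↦ (h.weakTendsto_x hS le_rfl hz i).of_succ,
    h.weakTendsto_y hS le_rfl hw, (h.weakTendsto_xn hS le_rfl hz).of_succ,
    h.weakTendsto_yn hS le_rfl hw⟩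

end IsProjectiveSplitting

end Convergence

end ProjectiveSplitting

open ProjectiveSplitting in
/-- main convergence theorem for one-forward-step projective splitting with
fixed stepsizes, assuming the algorithm never terminates, i.e. `π_k > 0` for all `k ≥ 1`.
The spaces `H₁, …, H_{n-1}` are indexed by `Fin m` with `m = n - 1`, `H_n = H₀`, and
`G_n = I`.  The operators with index `n` carry the suffix `n` (e.g. `An`, `Bn`, `xn`).
`Tᵢ = Aᵢ + Bᵢ` where each `Aᵢ` is maximal monotone and each `Bᵢ` is everywhere defined and
either `Lᵢ⁻¹`-cocoercive with `Lᵢ > 0` and `ρᵢ ≤ 2(1-αᵢ)/Lᵢ`, or constant.  The iterates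
follow the one-forward-step update and the halfspace projection update; the conclusion is
weak convergence of `(z^k, w^k)` to a point of the extended solution set `S`, together
with the weak convergence of `xᵢ^k, yᵢ^k, x_n^k, y_n^k` to the corresponding limits. -/
theorem one_forward_step_projective_splitting_weak_convergence
    {H0 : Type*} [NormedAddCommGroup H0] [InnerProductSpace ℝ H0] [CompleteSpace H0]
    {m : ℕ} {H : Fin m → Type*} [∀ i, NormedAddCommGroup (H i)]
    [∀ i, InnerProductSpace ℝ (H i)] [∀ i, CompleteSpace (H i)]
    (G : ∀ i, H0 →L[ℝ] H i)
    (A : ∀ i, H i → Set (H i)) (An : H0 → Set H0)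
    (B : ∀ i, H i → H i) (Bn : H0 → H0)
    -- each Aᵢ is maximal monotone
    (hAmono : ∀ i, ∀ x y a b, a ∈ A i x → b ∈ A i y → 0 ≤ ⟪a - b, x - y⟫_ℝ)
    (hAmax : ∀ i, ∀ x u, (∀ y v, v ∈ A i y → 0 ≤ ⟪u - v, x - y⟫_ℝ) → u ∈ A i x)
    (hAnmono : ∀ x y a b, a ∈ An x → b ∈ An y → 0 ≤ ⟪a - b, x - y⟫_ℝ)
    (hAnmax : ∀ x u, (∀ y v, v ∈ An y → 0 ≤ ⟪u - v, x - y⟫_ℝ) → u ∈ An x)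
    -- parameters
    (γ : ℝ) (hγ : 0 < γ)
    (α : Fin m → ℝ) (αn : ℝ)
    (hα0 : ∀ i, 0 < α i) (hα1 : ∀ i, α i ≤ 1) (hαn0 : 0 < αn) (hαn1 : αn ≤ 1)
    (ρ : Fin m → ℝ) (ρn : ℝ) (hρ : ∀ i, 0 < ρ i) (hρn : 0 < ρn)
    -- each Bᵢ is either Lᵢ⁻¹-cocoercive (Lᵢ > 0) with ρᵢ ≤ 2(1-αᵢ)/Lᵢ, or constant
    (hB : ∀ i, (∃ L : ℝ, 0 < L ∧
            (∀ x y, (1 / L) * ‖B i x - B i y‖ ^ 2 ≤ ⟪B i x - B i y, x - y⟫_ℝ) ∧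
            ρ i ≤ 2 * (1 - α i) / L)
          ∨ (∃ v, ∀ x, B i x = v))
    (hBn : (∃ L : ℝ, 0 < L ∧
            (∀ x y, (1 / L) * ‖Bn x - Bn y‖ ^ 2 ≤ ⟪Bn x - Bn y, x - y⟫_ℝ) ∧
            ρn ≤ 2 * (1 - αn) / L)
          ∨ (∃ v, ∀ x, Bn x = v))
    -- the extended solution set S is nonempty
    (hS : ∃ (zs : H0) (ws : ∀ i, H i),
        (∀ i, ∃ a ∈ A i (G i zs), ws i = a + B i (G i zs)) ∧
        (∃ a ∈ An zs, -∑ i, ContinuousLinearMap.adjoint (G i) (ws i) = a + Bn zs))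
    -- iterates
    (z : ℕ → H0) (w : ℕ → ∀ i, H i)
    (x : ℕ → ∀ i, H i) (xn : ℕ → H0)
    (a : ℕ → ∀ i, H i) (an : ℕ → H0)
    (y : ℕ → ∀ i, H i) (yn : ℕ → H0)
    (u : ℕ → ∀ i, H i) (v : ℕ → H0)
    (π τ φ : ℕ → ℝ)
    -- the one-forward-step update for i = 1, …, n-1
    (ha : ∀ k ≥ 1, ∀ i, a k i ∈ A i (x k i))
    (hx : ∀ k ≥ 1, ∀ i, x k i + ρ i • a k i
        = (1 - α i) • x (k - 1) i + α i • G i (z k) - ρ i • (B i (x (k - 1) i) - w k i))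
    (hy : ∀ k ≥ 1, ∀ i, y k i = a k i + B i (x k i))
    -- the one-forward-step update for i = n (G_n = I, w_n^k = -∑ᵢ Gᵢ* wᵢ^k)
    (han : ∀ k ≥ 1, an k ∈ An (xn k))
    (hxn : ∀ k ≥ 1, xn k + ρn • an k
        = (1 - αn) • xn (k - 1) + αn • z k
          - ρn • (Bn (xn (k - 1)) - (-∑ i, ContinuousLinearMap.adjoint (G i) (w k i))))
    (hyn : ∀ k ≥ 1, yn k = an k + Bn (xn k))
    -- the projection update
    (hu : ∀ k ≥ 1, ∀ i, u k i = x k i - G i (xn k))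
    (hv : ∀ k ≥ 1, v k = (∑ i, ContinuousLinearMap.adjoint (G i) (y k i)) + yn k)
    (hπ : ∀ k ≥ 1, π k = (∑ i, ‖u k i‖ ^ 2) + γ⁻¹ * ‖v k‖ ^ 2)
    (hπpos : ∀ k ≥ 1, 0 < π k)
    (hφ : ∀ k ≥ 1, φ k = (∑ i, ⟪G i (z k) - x k i, y k i - w k i⟫_ℝ)
        + ⟪z k - xn k, yn k - (-∑ i, ContinuousLinearMap.adjoint (G i) (w k i))⟫_ℝ)
    (hτ : ∀ k ≥ 1, τ k = max 0 (φ k) / π k)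
    (hznext : ∀ k ≥ 1, z (k + 1) = z k - (γ⁻¹ * τ k) • v k)
    (hwnext : ∀ k ≥ 1, ∀ i, w (k + 1) i = w k i - τ k • u k i) :
    ∃ (zbar : H0) (wbar : ∀ i, H i),
      -- (zbar, wbar) ∈ S
      ((∀ i, ∃ a ∈ A i (G i zbar), wbar i = a + B i (G i zbar)) ∧
        (∃ a ∈ An zbar, -∑ i, ContinuousLinearMap.adjoint (G i) (wbar i) = a + Bn zbar)) ∧
      -- (z^k, w^k) ⇀ (zbar, wbar) in the product space
      (∀ (q0 : H0) (qw : ∀ i, H i),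
        Filter.Tendsto (fun k => ⟪z k, q0⟫_ℝ + ∑ i, ⟪w k i, qw i⟫_ℝ) Filter.atTop
          (nhds (⟪zbar, q0⟫_ℝ + ∑ i, ⟪wbar i, qw i⟫_ℝ))) ∧
      -- xᵢ^k ⇀ Gᵢ zbar and yᵢ^k ⇀ wbarᵢ for i = 1, …, n-1
      (∀ i, ∀ q : H i, Filter.Tendsto (fun k => ⟪x k i, q⟫_ℝ) Filter.atTop
          (nhds ⟪G i zbar, q⟫_ℝ)) ∧
      (∀ i, ∀ q : H i, Filter.Tendsto (fun k => ⟪y k i, q⟫_ℝ) Filter.atTop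
          (nhds ⟪wbar i, q⟫_ℝ)) ∧
      -- x_n^k ⇀ zbar and y_n^k ⇀ -∑ᵢ Gᵢ* wbarᵢ
      (∀ q : H0, Filter.Tendsto (fun k => ⟪xn k, q⟫_ℝ) Filter.atTop (nhds ⟪zbar, q⟫_ℝ)) ∧
      (∀ q : H0, Filter.Tendsto (fun k => ⟪yn k, q⟫_ℝ) Filter.atTop
          (nhds ⟪-∑ i, ContinuousLinearMap.adjoint (G i) (wbar i), q⟫_ℝ)) := by
  let b (i : Fin m) : ForwardBackwardBlock (H i) := ⟨A i, B i, α i, ρ i, ⟨hAmono i, hAmax i⟩,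
    hα0 i, hα1 i, hρ i, rho_mul_norm_sq_le_of_cocoercive_or_const (hα1 i) (hB i)⟩
  let bn : ForwardBackwardBlock H0 := ⟨An, Bn, αn, ρn, ⟨hAnmono, hAnmax⟩,
    hαn0, hαn1, hρn, rho_mul_norm_sq_le_of_cocoercive_or_const hαn1 hBn⟩
  let s : Iterates H0 H :=
    ⟨fun k ↦ z (k + 1), fun k ↦ w (k + 1), x, xn, fun k ↦ y (k + 1), fun k ↦ yn (k + 1)⟩
  have hgap (k : ℕ) : u (k + 1) = s.gap G k := funext (hu _ k.succ_pos)
  have hres (k : ℕ) : v (k + 1) = s.dualResidual G k := hv _ k.succ_pos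
  have hnorm (k : ℕ) : π (k + 1) = s.gradNormSq G γ k := by
    rw [hπ _ k.succ_pos, hgap, hres, Iterates.gradNormSq]
  have hstep (k : ℕ) : τ (k + 1) = s.stepLength G γ k := by
    rw [hτ _ k.succ_pos, hφ _ k.succ_pos, hnorm]
    rfl
  have h : IsProjectiveSplitting G b bn γ s :=
    { gamma_pos := hγ
      isRun := fun i k ↦ ⟨_, ha _ k.succ_pos i, hx _ k.succ_pos i, hy _ k.succ_pos i⟩
      isRun_last := fun k ↦ ⟨_, han _ k.succ_pos, hxn _ k.succ_pos, hyn _ k.succ_pos⟩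
      gradNormSq_pos := fun k ↦ hnorm k ▸ hπpos _ k.succ_pos
      z_succ := fun k ↦ hstep k ▸ hres k ▸ hznext _ k.succ_pos
      w_succ := fun k i ↦ hstep k ▸ hgap k ▸ hwnext _ k.succ_pos i }
  obtain ⟨zs, ws, hS⟩ := hS
  obtain ⟨⟨Z, W⟩, hmem, hz, hw, hx, hy, hxn, hyn⟩ := h.exists_weakTendsto ⟨(zs, ws), hS⟩
  exact ⟨Z, W, hmem,
    fun q0 qw ↦ (hz.of_succ q0).add (tendsto_finsetSum _ fun i _ ↦ (hw i).of_succ (qw i)),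
    hx, fun i ↦ (hy i).of_succ, hxn, hyn.of_succ⟩
end
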